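/- If v > 0 and max_{k∈V} ‖Y_k − c_k‖_∞ ≤ L for some L ∈ (0,∞), then d_K(W, N(0,1)) ≤ max{ 68.5 · (D+1)² · 𝒜₃ / v³ , 22.88 · L·(D+1) / v }. -/

import Mathlib

open MeasureTheory ProbabilityTheory Filter

noncomputable section

/-- `G` is a dependency graph of the family `Y`: whenever `V₁, V₂` are disjoint sets of
vertices with no edge of `G` between them, the families `(Y k)_{k ∈ V₁}` and
`(Y k)_{k ∈ V₂}` are independent. -/
def IsDependencyGraph {Ω V E : Type*} [MeasurableSpace Ω] [MeasurableSpace E]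
    (μ : Measure Ω) (G : SimpleGraph V) (Y : V → Ω → E) : Prop :=
  ∀ V₁ V₂ : Set V, Disjoint V₁ V₂ →
    (∀ i ∈ V₁, ∀ j ∈ V₂, ¬ G.Adj i j) →
    IndepFun (fun ω (i : V₁) => Y i.1 ω) (fun ω (j : V₂) => Y j.1 ω) μ

/-- Kolmogorov distance between the law of `W` under `μ` and the standard normal law. -/
def dKolNormal {Ω : Type*} [MeasurableSpace Ω] (μ : Measure Ω) (W : Ω → ℝ) : ℝ :=
  ⨆ t : ℝ, |(μ {ω | W ω ≤ t}).toReal - (gaussianReal 0 1 (Set.Iic t)).toReal|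

/-!
Stein's method with a self-bounding smoothing argument. Let `X k = (Y k - c k) / v`, let `W` be the
sum of the centred `X k`, and let `f` solve Stein's equation for a ramp of width `ε` in place of the
indicator of `(-∞, z]`, so that the smoothed error is `E[f' W - W f W]`. Write `ξ k` for the centred
`X k` and `T` for the sum of the `X i` over the closed neighbourhood of `k`. Since `W - T` is
independent of `ξ k`, the term `E[ξ k f W]` equals `E[ξ k (f W - f (W - T))]`, which a Taylor
expansion compares with `E[ξ k T f' W]`; leaving out the neighbourhoods of both indices of a product
`ξ k * X j` compares this in turn with `E[ξ k T] E[f' W]`, and `∑ k, E[ξ k T] = Var W = 1`.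

The remainders consist of triple products weighted by the local Lipschitz constant of `f'` at `W`,
a variable which changes little when the neighbourhood of the three factors is left out of `W`. It
therefore decouples from them, and its mean involves only `E|W|` and the probability that `W` lies
near `[z, z + ε]`. The latter is at most `2 δ` plus a multiple of the interval length, where `δ` is
the Kolmogorov distance itself. The resulting inequality for `δ`, with `ε` proportional to the
claimed bound, can be solved for `δ`.
-/

open Set
open scoped Topology ENNReal

local notation "γ" => gaussianReal 0 1
local notation "φ" => gaussianPDFReal 0 1

section Gaussian

lemma gaussianPDFReal_zero_one (x : ℝ) : φ x = (√(2 * Real.pi))⁻¹ * Real.exp (-x ^ 2 / 2) := by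
  simp [gaussianPDFReal]

lemma gaussianPDFReal_zero_one_neg (x : ℝ) : φ (-x) = φ x := by
  simp only [gaussianPDFReal_zero_one, neg_sq]

lemma gaussianPDFReal_zero_one_pos (x : ℝ) : 0 < φ x :=
  gaussianPDFReal_pos 0 1 x one_ne_zero

lemma gaussianPDFReal_zero_one_le (x : ℝ) : φ x ≤ (√(2 * Real.pi))⁻¹ := by
  rw [gaussianPDFReal_zero_one]
  exact mul_le_of_le_one_right (by positivity)
    (Real.exp_le_one_iff.mpr (by linarith [sq_nonneg x]))

lemma hasDerivAt_gaussianPDFReal_zero_one (x : ℝ) : HasDerivAt φ (-(x * φ x)) x := by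
  have hexponent : HasDerivAt (fun x : ℝ => -x ^ 2 / 2) (-x) x := by
    refine ((hasDerivAt_pow 2 x).neg.div_const 2).congr_deriv ?_
    norm_num
    ring
  rw [funext gaussianPDFReal_zero_one]
  refine (hexponent.exp.const_mul (√(2 * Real.pi))⁻¹).congr_deriv ?_
  ring

lemma continuous_gaussianPDFReal_zero_one : Continuous φ :=
  continuous_iff_continuousAt.mpr fun x => (hasDerivAt_gaussianPDFReal_zero_one x).continuousAt

lemma setIntegral_gaussianReal_zero_one (u : ℝ → ℝ) {s : Set ℝ} (hs : MeasurableSet s) :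
    ∫ x in s, u x ∂γ = ∫ x in s, φ x * u x := by
  rw [← integral_indicator hs, integral_gaussianReal_eq_integral_smul one_ne_zero,
    ← integral_indicator hs]
  congr with x
  by_cases hx : x ∈ s <;> simp [hx]

lemma integrable_gaussianReal_zero_one_iff {u : ℝ → ℝ} :
    Integrable u γ ↔ Integrable fun x => φ x * u x := by
  rw [gaussianReal_of_var_ne_zero 0 one_ne_zero,
    integrable_withDensity_iff_integrable_smul' (measurable_gaussianPDF 0 1)
      (Eventually.of_forall fun x => gaussianPDF_lt_top)]
  simp only [toReal_gaussianPDF, smul_eq_mul]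

lemma setIntegral_gaussianReal_zero_one_le {u : ℝ → ℝ} {s : Set ℝ} (hs : MeasurableSet s)
    (hu : IntegrableOn u s) (hnonneg : ∀ x ∈ s, 0 ≤ u x) :
    ∫ x in s, u x ∂γ ≤ (√(2 * Real.pi))⁻¹ * ∫ x in s, u x := by
  rw [setIntegral_gaussianReal_zero_one u hs, ← integral_const_mul]
  refine integral_mono_of_nonneg ?_ (hu.const_mul _) ?_ <;>
    filter_upwards [ae_restrict_mem hs] with x hx
  · exact mul_nonneg (gaussianPDFReal_zero_one_pos x).le (hnonneg x hx)
  · exact mul_le_mul_of_nonneg_right (gaussianPDFReal_zero_one_le x) (hnonneg x hx)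

lemma measureReal_gaussianReal_zero_one {s : Set ℝ} (hs : MeasurableSet s) :
    Measure.real γ s = ∫ x in s, φ x := by
  simpa using setIntegral_gaussianReal_zero_one (fun _ => 1) hs

lemma measureReal_gaussianReal_zero_one_Ioc_le {a b : ℝ} (hab : a ≤ b) :
    Measure.real γ (Ioc a b) ≤ (√(2 * Real.pi))⁻¹ * (b - a) := by
  simpa [hab] using setIntegral_gaussianReal_zero_one_le (u := fun _ => 1) measurableSet_Ioc
    (integrableOn_const (by simp)) (s := Ioc a b) fun _ _ => zero_le_one

lemma measureReal_gaussianReal_zero_one_Ioi_le {w : ℝ} (hw : 0 ≤ w) :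
    Measure.real γ (Ioi w) ≤ √(Real.pi / 2) * φ w := by
  have hshift : ∫ x in Ioi w, φ x = ∫ x in Ioi 0, φ (x + w) := by
    simpa using ((measurePreserving_add_right volume w).setIntegral_preimage_emb
      (measurableEmbedding_addRight w) φ (Ioi w)).symm
  have hpdf : ∀ x ∈ Ioi (0 : ℝ), φ (x + w) ≤ φ w * Real.exp (-(1 / 2) * x ^ 2) := fun x hx => by
    rw [gaussianPDFReal_zero_one, gaussianPDFReal_zero_one, mul_assoc, ← Real.exp_add]
    gcongr
    nlinarith [mul_nonneg (le_of_lt hx) hw]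
  have hhalf : √(Real.pi / (1 / 2)) / 2 = √(Real.pi / 2) := by
    rw [show Real.pi / (1 / 2) = 2 ^ 2 * (Real.pi / 2) by ring, Real.sqrt_mul (by positivity),
      Real.sqrt_sq zero_le_two]
    ring
  calc Measure.real γ (Ioi w) = ∫ x in Ioi 0, φ (x + w) := by
        rw [measureReal_gaussianReal_zero_one measurableSet_Ioi, hshift]
    _ ≤ ∫ x in Ioi 0, φ w * Real.exp (-(1 / 2) * x ^ 2) :=
        setIntegral_mono_on ((integrable_gaussianPDFReal 0 1).comp_add_right w).integrableOn
          ((integrable_exp_neg_mul_sq one_half_pos).const_mul _).integrableOn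
          measurableSet_Ioi hpdf
    _ = √(Real.pi / 2) * φ w := by
        rw [integral_const_mul, integral_gaussian_Ioi, hhalf, mul_comm]

lemma tendsto_gaussianPDFReal_zero_one_atTop : Tendsto φ atTop (𝓝 0) := by
  have hexponent : Tendsto (fun x : ℝ => -(x ^ 2 / 2)) atTop atBot :=
    tendsto_neg_atTop_atBot.comp ((tendsto_pow_atTop two_ne_zero).atTop_div_const two_pos)
  rw [funext gaussianPDFReal_zero_one]
  simpa [neg_div] using (Real.tendsto_exp_atBot.comp hexponent).const_mul (√(2 * Real.pi))⁻¹

lemma integrable_mul_gaussianPDFReal_zero_one : Integrable fun x => x * φ x := by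
  refine ((integrable_mul_exp_neg_mul_sq one_half_pos).const_mul
    (√(2 * Real.pi))⁻¹).congr (.of_forall fun x => ?_)
  simp only [gaussianPDFReal_zero_one]
  ring_nf

lemma setIntegral_Ioi_mul_gaussianPDFReal_zero_one (w : ℝ) : ∫ x in Ioi w, x * φ x = φ w := by
  have hderiv : ∀ x ∈ Ici w, HasDerivAt (fun x => -φ x) (x * φ x) x := fun x _ =>
    (hasDerivAt_gaussianPDFReal_zero_one x).neg.congr_deriv (neg_neg _)
  simpa using integral_Ioi_of_hasDerivAt_of_tendsto' hderiv
    integrable_mul_gaussianPDFReal_zero_one.integrableOn tendsto_gaussianPDFReal_zero_one_atTop.neg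

lemma mul_measureReal_gaussianReal_zero_one_Ioi_le (w : ℝ) :
    w * Measure.real γ (Ioi w) ≤ φ w := by
  rw [measureReal_gaussianReal_zero_one measurableSet_Ioi, ← integral_const_mul,
    ← setIntegral_Ioi_mul_gaussianPDFReal_zero_one w]
  exact setIntegral_mono_on ((integrable_gaussianPDFReal 0 1).const_mul w).integrableOn
    integrable_mul_gaussianPDFReal_zero_one.integrableOn measurableSet_Ioi fun x hx =>
      mul_le_mul_of_nonneg_right (le_of_lt hx) (gaussianPDFReal_zero_one_pos x).le

end Gaussian

section Stein

lemma hasDerivAt_setIntegral_Iic {g : ℝ → ℝ} (hg : Integrable g) (hcont : Continuous g) (w : ℝ) :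
    HasDerivAt (fun w => ∫ x in Iic w, g x) (g w) w := by
  have hsplit : (fun w => ∫ x in Iic w, g x) =
      fun w => (∫ x in Iic (0 : ℝ), g x) + ∫ x in (0 : ℝ)..w, g x := by
    funext w
    rw [← intervalIntegral.integral_Iic_sub_Iic hg.integrableOn hg.integrableOn]
    ring
  rw [hsplit]
  exact (hcont.integral_hasStrictDerivAt 0 w).hasDerivAt.const_add _

/-- The solution `f` of Stein's equation `f' w - w * f w = h w - ∫ h dγ` that stays bounded when
`h` is bounded. -/
def steinSolution (h : ℝ → ℝ) (w : ℝ) : ℝ :=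
  (φ w)⁻¹ * ∫ x in Iic w, (h x - ∫ y, h y ∂γ) ∂γ

lemma hasDerivAt_steinSolution {h : ℝ → ℝ} (hcont : Continuous h) (hint : Integrable h γ)
    (w : ℝ) :
    HasDerivAt (steinSolution h) (w * steinSolution h w + (h w - ∫ y, h y ∂γ)) w := by
  have hne : φ w ≠ 0 := (gaussianPDFReal_zero_one_pos w).ne'
  have hweighted := hasDerivAt_setIntegral_Iic
    (integrable_gaussianReal_zero_one_iff.mp (hint.sub (integrable_const (∫ y, h y ∂γ))))
    (continuous_gaussianPDFReal_zero_one.mul (hcont.sub continuous_const)) w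
  have hinv := (hasDerivAt_gaussianPDFReal_zero_one w).fun_inv hne
  unfold steinSolution
  simp only [setIntegral_gaussianReal_zero_one _ measurableSet_Iic]
  refine (hinv.mul hweighted).congr_deriv ?_
  simp only [Pi.sub_apply]
  field_simp

lemma steinSolution_eq_neg_Ioi {h : ℝ → ℝ} (hint : Integrable h γ) (w : ℝ) :
    steinSolution h w = -((φ w)⁻¹ * ∫ x in Ioi w, (h x - ∫ y, h y ∂γ) ∂γ) := by
  have hcentred : Integrable (fun x => h x - ∫ y, h y ∂γ) γ := hint.sub (integrable_const _)
  have hzero : (∫ x in Iic w, (h x - ∫ y, h y ∂γ) ∂γ) +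
      ∫ x in Ioi w, (h x - ∫ y, h y ∂γ) ∂γ = 0 := by
    rw [intervalIntegral.integral_Iic_add_Ioi hcentred.integrableOn hcentred.integrableOn,
      integral_sub hint (integrable_const _)]
    simp
  rw [steinSolution, eq_neg_of_add_eq_zero_left hzero, mul_neg]

lemma measurePreserving_neg_gaussianReal_zero_one : MeasurePreserving (fun x : ℝ => -x) γ γ :=
  ⟨measurable_neg, by rw [gaussianReal_map_neg, neg_zero]⟩

lemma integral_comp_neg_gaussianReal_zero_one (h : ℝ → ℝ) : ∫ x, h (-x) ∂γ = ∫ x, h x ∂γ :=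
  measurePreserving_neg_gaussianReal_zero_one.integral_comp
    (MeasurableEquiv.neg ℝ).measurableEmbedding h

lemma steinSolution_neg {h : ℝ → ℝ} (hint : Integrable h γ) (w : ℝ) :
    steinSolution h (-w) = -steinSolution (fun x => h (-x)) w := by
  have := nullSingletonClass_gaussianReal (μ := 0) one_ne_zero
  have hreflect := measurePreserving_neg_gaussianReal_zero_one.setIntegral_preimage_emb
    (MeasurableEquiv.neg ℝ).measurableEmbedding (fun x => h x - ∫ y, h y ∂γ) (Ioi (-w))
  rw [steinSolution_eq_neg_Ioi hint, steinSolution, integral_comp_neg_gaussianReal_zero_one,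
    gaussianPDFReal_zero_one_neg, ← hreflect, integral_Iic_eq_integral_Iio]
  simp

lemma setIntegral_mem_Icc_mul_measureReal {α : Type*} [MeasurableSpace α] {ν : Measure α}
    [IsFiniteMeasure ν] {g : α → ℝ} (hint : Integrable g ν) {a b : ℝ}
    (hmem : ∀ x, g x ∈ Icc a b) (s : Set α) :
    ∫ x in s, g x ∂ν ∈ Icc (a * ν.real s) (b * ν.real s) := by
  constructor
  · simpa [mul_comm] using
      integral_mono (integrable_const a) hint.integrableOn fun x => (hmem x).1
  · simpa [mul_comm] using
      integral_mono hint.integrableOn (integrable_const b) fun x => (hmem x).2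

lemma integrable_of_continuous_of_mem_Icc {ν : Measure ℝ} [IsFiniteMeasure ν] {h : ℝ → ℝ}
    (hcont : Continuous h) (hmem : ∀ x, h x ∈ Icc 0 1) : Integrable h ν :=
  .of_bound hcont.aestronglyMeasurable 1 (.of_forall fun x => by
    rw [Real.norm_eq_abs, abs_of_nonneg (hmem x).1]
    exact (hmem x).2)

lemma integral_gaussianReal_mem_Icc {h : ℝ → ℝ} (hint : Integrable h γ)
    (hmem : ∀ x, h x ∈ Icc 0 1) : ∫ x, h x ∂γ ∈ Icc 0 1 := by
  simpa using setIntegral_mem_Icc_mul_measureReal hint hmem univ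

lemma steinSolution_bounds_of_nonneg {h : ℝ → ℝ} (hint : Integrable h γ)
    (hmem : ∀ x, h x ∈ Icc 0 1) {w : ℝ} (hw : 0 ≤ w) :
    |steinSolution h w| ≤ √(Real.pi / 2) ∧
      w * steinSolution h w ∈ Icc (∫ x, h x ∂γ - 1) (∫ x, h x ∂γ) := by
  have hpdf := gaussianPDFReal_zero_one_pos w
  obtain ⟨hmean0, hmean1⟩ := integral_gaussianReal_mem_Icc hint hmem
  obtain ⟨hlower, hupper⟩ := setIntegral_mem_Icc_mul_measureReal
    (a := -∫ y, h y ∂γ) (b := 1 - ∫ y, h y ∂γ) (hint.sub (integrable_const (∫ y, h y ∂γ)))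
    (fun x => ⟨by simpa using (hmem x).1, by simpa using (hmem x).2⟩) (Ioi w)
  rw [steinSolution_eq_neg_Ioi hint, ← div_eq_inv_mul]
  simp only [Pi.sub_apply] at hlower hupper
  set m := ∫ x, h x ∂γ
  set r := Measure.real γ (Ioi w) / φ w
  set q := (∫ x in Ioi w, (h x - m) ∂γ) / φ w
  have hr0 : 0 ≤ r := by positivity
  have hr : r ≤ √(Real.pi / 2) :=
    (div_le_iff₀ hpdf).mpr (measureReal_gaussianReal_zero_one_Ioi_le hw)
  have hwr : w * r ≤ 1 := by
    rw [← mul_div_assoc, div_le_one hpdf]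
    exact mul_measureReal_gaussianReal_zero_one_Ioi_le w
  have hq_lower : -m * r ≤ q := by
    rw [← mul_div_assoc]
    exact div_le_div_of_nonneg_right hlower hpdf.le
  have hq_upper : q ≤ (1 - m) * r := by
    rw [← mul_div_assoc]
    exact div_le_div_of_nonneg_right hupper hpdf.le
  refine ⟨?_, ?_, ?_⟩
  · rw [abs_neg, abs_le]
    constructor <;> nlinarith
  · nlinarith [mul_le_mul_of_nonneg_left hq_upper hw]
  · nlinarith [mul_le_mul_of_nonneg_left hq_lower hw]

lemma steinSolution_bounds {h : ℝ → ℝ} (hcont : Continuous h) (hmem : ∀ x, h x ∈ Icc 0 1)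
    (w : ℝ) :
    |steinSolution h w| ≤ √(Real.pi / 2) ∧
      w * steinSolution h w ∈ Icc (∫ x, h x ∂γ - 1) (∫ x, h x ∂γ) := by
  rcases le_total 0 w with hw | hw
  · exact steinSolution_bounds_of_nonneg (integrable_of_continuous_of_mem_Icc hcont hmem) hmem hw
  · have hreflected := steinSolution_bounds_of_nonneg (h := fun x => h (-x))
      (integrable_of_continuous_of_mem_Icc (by fun_prop) fun x => hmem (-x))
      (fun x => hmem (-x)) (neg_nonneg.mpr hw)
    rwa [integral_comp_neg_gaussianReal_zero_one, ← neg_neg (steinSolution _ (-w)),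
      ← steinSolution_neg (integrable_of_continuous_of_mem_Icc hcont hmem), neg_neg, abs_neg,
      neg_mul_neg] at hreflected

lemma abs_deriv_steinSolution_le {h : ℝ → ℝ} (hcont : Continuous h) (hmem : ∀ x, h x ∈ Icc 0 1)
    (w : ℝ) : |deriv (steinSolution h) w| ≤ 1 := by
  obtain ⟨-, hlower, hupper⟩ := steinSolution_bounds hcont hmem w
  rw [(hasDerivAt_steinSolution hcont (integrable_of_continuous_of_mem_Icc hcont hmem) w).deriv,
    abs_le]
  constructor <;> linarith [(hmem w).1, (hmem w).2]

end Stein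

section Ramp

/-- The piecewise linear approximation of the indicator of `Iic z` that descends from `1` to `0`
on `[z, z + ε]`. -/
def ramp (z ε w : ℝ) : ℝ := max 0 (min 1 (1 - (w - z) / ε))

variable {z ε : ℝ}

lemma continuous_ramp (z ε : ℝ) : Continuous (ramp z ε) := by
  unfold ramp
  fun_prop

lemma ramp_mem_Icc (z ε w : ℝ) : ramp z ε w ∈ Icc 0 1 :=
  ⟨le_max_left _ _, max_le zero_le_one (min_le_left _ _)⟩

lemma ramp_of_le (hε : 0 < ε) {w : ℝ} (hw : w ≤ z) : ramp z ε w = 1 := by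
  have hdiv : (w - z) / ε ≤ 0 := div_nonpos_of_nonpos_of_nonneg (by linarith) hε.le
  rw [ramp, min_eq_left (by linarith), max_eq_right zero_le_one]

lemma ramp_of_ge (hε : 0 < ε) {w : ℝ} (hw : z + ε ≤ w) : ramp z ε w = 0 := by
  have hdiv : 1 ≤ (w - z) / ε := (one_le_div hε).mpr (by linarith)
  rw [ramp, max_eq_left (min_le_of_right_le (by linarith))]

lemma ramp_of_mem_Icc (hε : 0 < ε) {w : ℝ} (hw : w ∈ Icc z (z + ε)) :
    ramp z ε w = 1 - (w - z) / ε := by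
  have hdiv0 : 0 ≤ (w - z) / ε := div_nonneg (by linarith [hw.1]) hε.le
  have hdiv1 : (w - z) / ε ≤ 1 := (div_le_one hε).mpr (by linarith [hw.2])
  rw [ramp, min_eq_right (by linarith), max_eq_right (by linarith)]

lemma abs_ramp_sub_ramp_le (hε : 0 < ε) (x y : ℝ) : |ramp z ε x - ramp z ε y| ≤ ε⁻¹ * |x - y| := by
  unfold ramp
  calc _ ≤ |1 - (x - z) / ε - (1 - (y - z) / ε)| := by
        refine (abs_max_sub_max_le_max 0 _ 0 _).trans (max_le (by simp) ?_)
        exact (abs_min_sub_min_le_max 1 _ 1 _).trans (max_le (by simp) le_rfl)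
    _ = ε⁻¹ * |x - y| := by
        rw [← abs_of_pos (inv_pos.mpr hε), ← abs_mul, abs_sub_comm]
        ring_nf

lemma integral_Ioc_ramp (hε : 0 < ε) : ∫ x in Ioc z (z + ε), ramp z ε x = ε / 2 := by
  rw [setIntegral_congr_fun measurableSet_Ioc fun x hx =>
    ramp_of_mem_Icc hε (Ioc_subset_Icc_self hx),
    ← intervalIntegral.integral_of_le (by linarith), intervalIntegral.integral_sub (by simp)
      (Continuous.intervalIntegrable (by fun_prop) _ _),
    intervalIntegral.integral_div, intervalIntegral.integral_sub (by simp) (by simp)]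
  simp only [intervalIntegral.integral_const, integral_id, smul_eq_mul]
  field_simp
  ring

lemma integral_ramp_eq (hε : 0 < ε) {ν : Measure ℝ} [IsFiniteMeasure ν] :
    ∫ x, ramp z ε x ∂ν = ν.real (Iic z) + ∫ x in Ioc z (z + ε), ramp z ε x ∂ν := by
  have hint : Integrable (ramp z ε) ν :=
    integrable_of_continuous_of_mem_Icc (continuous_ramp z ε) (ramp_mem_Icc z ε)
  have hIic : ∫ x in Iic z, ramp z ε x ∂ν = ν.real (Iic z) := by
    rw [setIntegral_congr_fun measurableSet_Iic fun x hx => ramp_of_le hε hx]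
    simp
  have hIoi : ∫ x in Ioi (z + ε), ramp z ε x ∂ν = 0 :=
    setIntegral_eq_zero_of_forall_eq_zero fun x hx => ramp_of_ge hε (le_of_lt hx)
  rw [← integral_add_compl measurableSet_Iic hint, hIic, compl_Iic,
    ← Ioc_union_Ioi_eq_Ioi (show z ≤ z + ε by linarith),
    setIntegral_union (Ioc_disjoint_Ioi le_rfl) measurableSet_Ioi hint.integrableOn
      hint.integrableOn, hIoi, add_zero]

lemma measureReal_Iic_le_integral_ramp (hε : 0 < ε) {ν : Measure ℝ} [IsFiniteMeasure ν] :
    ν.real (Iic z) ≤ ∫ x, ramp z ε x ∂ν := by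
  rw [integral_ramp_eq hε]
  exact le_add_of_nonneg_right (integral_nonneg fun x => (ramp_mem_Icc z ε x).1)

lemma integral_ramp_le_measureReal_Iic (hε : 0 < ε) {ν : Measure ℝ} [IsFiniteMeasure ν] :
    ∫ x, ramp z ε x ∂ν ≤ ν.real (Iic (z + ε)) := by
  rw [integral_ramp_eq hε, ← Iic_union_Ioc_eq_Iic (show z ≤ z + ε by linarith),
    measureReal_union (Iic_disjoint_Ioc le_rfl) measurableSet_Ioc]
  gcongr
  calc ∫ x in Ioc z (z + ε), ramp z ε x ∂ν ≤ ∫ _ in Ioc z (z + ε), 1 ∂ν :=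
        integral_mono (integrable_of_continuous_of_mem_Icc (continuous_ramp z ε)
          (ramp_mem_Icc z ε)) (integrable_const 1) fun x => (ramp_mem_Icc z ε x).2
    _ = ν.real (Ioc z (z + ε)) := by simp

lemma integral_ramp_gaussianReal_sub_le (hε : 0 < ε) :
    ∫ x, ramp z ε x ∂γ - Measure.real γ (Iic z) ≤ (√(2 * Real.pi))⁻¹ * (ε / 2) := by
  rw [integral_ramp_eq hε, add_sub_cancel_left, ← integral_Ioc_ramp (z := z) hε]
  exact setIntegral_gaussianReal_zero_one_le measurableSet_Ioc
    ((continuous_ramp z ε).integrableOn_Ioc) fun x _ => (ramp_mem_Icc z ε x).1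

lemma sub_integral_ramp_gaussianReal_le (hε : 0 < ε) :
    Measure.real γ (Iic (z + ε)) - ∫ x, ramp z ε x ∂γ ≤ (√(2 * Real.pi))⁻¹ * (ε / 2) := by
  have hramp : IntegrableOn (ramp z ε) (Ioc z (z + ε)) := (continuous_ramp z ε).integrableOn_Ioc
  have hvolume : ∫ x in Ioc z (z + ε), (1 - ramp z ε x) = ε / 2 := by
    rw [integral_sub (integrable_const _) hramp, integral_Ioc_ramp hε]
    simp [hε.le]
    ring
  have hgaussian : Measure.real γ (Iic (z + ε)) - ∫ x, ramp z ε x ∂γ =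
      ∫ x in Ioc z (z + ε), (1 - ramp z ε x) ∂γ := by
    rw [integral_ramp_eq hε, integral_sub (integrable_const _) (integrable_of_continuous_of_mem_Icc
      (continuous_ramp z ε) (ramp_mem_Icc z ε)).integrableOn,
      ← Iic_union_Ioc_eq_Iic (show z ≤ z + ε by linarith),
      measureReal_union (Iic_disjoint_Ioc le_rfl) measurableSet_Ioc]
    simp
  rw [hgaussian, ← hvolume]
  exact setIntegral_gaussianReal_zero_one_le measurableSet_Ioc
    ((integrableOn_const (by simp)).sub hramp) fun x _ => sub_nonneg.mpr (ramp_mem_Icc z ε x).2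

end Ramp

section SteinWeight

/-- The local Lipschitz constant, on the ball of radius `ρ` about `w`, of the derivative of the
Stein solution for `ramp z ε`. -/
def steinWeight (z ε ρ w : ℝ) : ℝ :=
  √(Real.pi / 2) + |w| + ρ + ε⁻¹ * (Ioc (z - ρ) (z + ε + ρ)).indicator 1 w

variable {z ε ρ : ℝ}

lemma measurable_steinWeight : Measurable (steinWeight z ε ρ) := by
  unfold steinWeight
  have hindicator : Measurable ((Ioc (z - ρ) (z + ε + ρ)).indicator (1 : ℝ → ℝ)) :=
    measurable_one.indicator measurableSet_Ioc
  fun_prop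

lemma steinWeight_nonneg (hε : 0 < ε) (hρ : 0 ≤ ρ) (w : ℝ) : 0 ≤ steinWeight z ε ρ w := by
  have hindicator := indicator_nonneg (s := Ioc (z - ρ) (z + ε + ρ)) (f := (1 : ℝ → ℝ))
    (fun _ _ => zero_le_one) w
  unfold steinWeight
  positivity

lemma steinWeight_le_of_abs_sub_le (hε : 0 < ε) {r w w' : ℝ} (hr : |w - w'| ≤ r) :
    steinWeight z ε ρ w ≤ steinWeight z ε (ρ + r) w' := by
  have hw : |w| ≤ |w'| + r := by linarith [abs_sub_abs_le_abs_sub w w']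
  obtain ⟨hlower, hupper⟩ := abs_le.mp hr
  have hindicator : (Ioc (z - ρ) (z + ε + ρ)).indicator (1 : ℝ → ℝ) w ≤
      (Ioc (z - (ρ + r)) (z + ε + (ρ + r))).indicator 1 w' := by
    by_cases hmem : w ∈ Ioc (z - ρ) (z + ε + ρ)
    · rw [indicator_of_mem hmem, indicator_of_mem]
      · rfl
      · exact ⟨by linarith [hmem.1], by linarith [hmem.2]⟩
    · rw [indicator_of_notMem hmem]
      exact indicator_nonneg (fun _ _ => zero_le_one) _
  have hscaled := mul_le_mul_of_nonneg_left hindicator (inv_pos.mpr hε).le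
  unfold steinWeight
  linarith

lemma abs_ramp_sub_ramp_le_indicator (hε : 0 < ε) {w x y : ℝ} (hx : |x - w| ≤ ρ)
    (hy : |y - w| ≤ ρ) :
    |ramp z ε x - ramp z ε y| ≤
      ε⁻¹ * (Ioc (z - ρ) (z + ε + ρ)).indicator 1 w * |x - y| := by
  by_cases hw : w ∈ Ioc (z - ρ) (z + ε + ρ)
  · simpa [indicator_of_mem hw] using abs_ramp_sub_ramp_le hε x y
  rw [abs_le] at hx hy
  rw [mem_Ioc, not_and_or, not_lt, not_le] at hw
  suffices ramp z ε x = ramp z ε y by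
    rw [this, sub_self, abs_zero]
    exact mul_nonneg (mul_nonneg (inv_pos.mpr hε).le
      (indicator_nonneg (fun _ _ => zero_le_one) w)) (abs_nonneg _)
  rcases hw with hw | hw
  · rw [ramp_of_le hε (by linarith), ramp_of_le hε (by linarith)]
  · rw [ramp_of_ge hε (by linarith), ramp_of_ge hε (by linarith)]

lemma abs_mul_steinSolution_sub_le {h : ℝ → ℝ} (hcont : Continuous h)
    (hmem : ∀ x, h x ∈ Icc 0 1) {w x y : ℝ} (hx : |x - w| ≤ ρ) (hy : |y - w| ≤ ρ) :
    |x * steinSolution h x - y * steinSolution h y| ≤ (√(Real.pi / 2) + |w| + ρ) * |x - y| := by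
  have hderiv : ∀ u, HasDerivAt (fun u => u * steinSolution h u)
      (1 * steinSolution h u + u * deriv (steinSolution h) u) u := fun u =>
    (hasDerivAt_id u).mul (hasDerivAt_steinSolution hcont
      (integrable_of_continuous_of_mem_Icc hcont hmem) u).differentiableAt.hasDerivAt
  refine (convex_closedBall w ρ).norm_image_sub_le_of_norm_hasDerivWithin_le
    (fun u _ => (hderiv u).hasDerivWithinAt) (fun u hu => ?_) hy hx
  have hu' : |u| ≤ |w| + ρ := by
    linarith [abs_sub_abs_le_abs_sub u w, mem_closedBall_iff_norm.mp hu, Real.norm_eq_abs (u - w)]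
  calc |1 * steinSolution h u + u * deriv (steinSolution h) u|
      ≤ |steinSolution h u| + |u| * |deriv (steinSolution h) u| := by
        rw [one_mul, ← abs_mul]
        exact abs_add_le _ _
    _ ≤ √(Real.pi / 2) + |u| * 1 := by
        gcongr
        exacts [(steinSolution_bounds hcont hmem u).1, abs_deriv_steinSolution_le hcont hmem u]
    _ ≤ √(Real.pi / 2) + |w| + ρ := by linarith

lemma abs_deriv_steinSolution_ramp_sub_le (hε : 0 < ε) {w x y : ℝ} (hx : |x - w| ≤ ρ)
    (hy : |y - w| ≤ ρ) :
    |deriv (steinSolution (ramp z ε)) x - deriv (steinSolution (ramp z ε)) y| ≤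
      steinWeight z ε ρ w * |x - y| := by
  have hcont := continuous_ramp z ε
  have hmem := ramp_mem_Icc z ε
  have hderiv := fun u => (hasDerivAt_steinSolution hcont
    (integrable_of_continuous_of_mem_Icc hcont hmem) u).deriv
  calc |deriv (steinSolution (ramp z ε)) x - deriv (steinSolution (ramp z ε)) y|
      = |(x * steinSolution (ramp z ε) x - y * steinSolution (ramp z ε) y) +
          (ramp z ε x - ramp z ε y)| := by
        rw [hderiv, hderiv]
        ring_nf
    _ ≤ (√(Real.pi / 2) + |w| + ρ) * |x - y| +
          ε⁻¹ * (Ioc (z - ρ) (z + ε + ρ)).indicator 1 w * |x - y| :=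
        (abs_add_le _ _).trans (add_le_add (abs_mul_steinSolution_sub_le hcont hmem hx hy)
          (abs_ramp_sub_ramp_le_indicator hε hx hy))
    _ = steinWeight z ε ρ w * |x - y| := by
        unfold steinWeight
        ring

end SteinWeight

section Neighbourhood

variable {Ω V : Type*} [Fintype V] [DecidableEq V] {G : SimpleGraph V} [DecidableRel G.Adj]

/-- The closed neighbourhood of a finite set of vertices: the set itself together with all
neighbours of its elements. -/
def closedNeighborFinset (G : SimpleGraph V) [DecidableRel G.Adj] (s : Finset V) : Finset V :=
  s.biUnion fun k => insert k (G.neighborFinset k)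

lemma mem_closedNeighborFinset {s : Finset V} {j : V} :
    j ∈ closedNeighborFinset G s ↔ ∃ k ∈ s, j = k ∨ G.Adj k j := by
  simp [closedNeighborFinset]

lemma mem_closedNeighborFinset_singleton_comm {k j : V} :
    j ∈ closedNeighborFinset G {k} ↔ k ∈ closedNeighborFinset G {j} := by
  simp [mem_closedNeighborFinset, eq_comm, G.adj_comm]

lemma closedNeighborFinset_pair (k j : V) :
    closedNeighborFinset G {k, j} = closedNeighborFinset G {k} ∪ closedNeighborFinset G {j} := by
  simp [closedNeighborFinset]

lemma card_closedNeighborFinset_le {D : ℕ} (hD : ∀ k, G.degree k ≤ D) (s : Finset V) :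
    (closedNeighborFinset G s).card ≤ s.card * (D + 1) :=
  Finset.card_biUnion_le_card_mul _ _ _ fun k _ =>
    (Finset.card_insert_le _ _).trans (Nat.succ_le_succ (hD k))

lemma card_closedNeighborFinset_singleton_le {D : ℕ} (hD : ∀ k, G.degree k ≤ D) (k : V) :
    ((closedNeighborFinset G {k}).card : ℝ) ≤ D + 1 := by
  exact_mod_cast (card_closedNeighborFinset_le hD {k}).trans_eq (one_mul _)

section Sums

variable {D : ℕ} {x : V → ℝ}

lemma sum_sum_closedNeighborFinset_le (hD : ∀ k, G.degree k ≤ D) (hx : ∀ k, 0 ≤ x k) :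
    ∑ k, ∑ i ∈ closedNeighborFinset G {k}, x i ≤ (D + 1) * ∑ k, x k := by
  have hswap : ∑ k, ∑ i ∈ closedNeighborFinset G {k}, x i =
      ∑ i, ∑ _ ∈ closedNeighborFinset G {i}, x i :=
    Finset.sum_comm' fun _ _ => by simp [mem_closedNeighborFinset_singleton_comm]
  rw [hswap, Finset.mul_sum]
  refine Finset.sum_le_sum fun i _ => ?_
  rw [Finset.sum_const, nsmul_eq_mul]
  exact mul_le_mul_of_nonneg_right (card_closedNeighborFinset_singleton_le hD i) (hx i)

lemma sum_sum_sum_mean_le (hD : ∀ k, G.degree k ≤ D) (hx : ∀ k, 0 ≤ x k) :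
    ∑ k, ∑ i ∈ closedNeighborFinset G {k}, ∑ j ∈ closedNeighborFinset G {k},
      (x k + x i + x j) / 3 ≤ (D + 1) ^ 2 * ∑ k, x k := by
  have hsum : ∀ k, ∑ i ∈ closedNeighborFinset G {k}, ∑ j ∈ closedNeighborFinset G {k},
      (x k + x i + x j) / 3 ≤
        ((D + 1) ^ 2 * x k + 2 * (D + 1) * ∑ i ∈ closedNeighborFinset G {k}, x i) / 3 := by
    intro k
    have hk := hx k
    have hcard := card_closedNeighborFinset_singleton_le hD k
    have hnonneg : 0 ≤ ∑ i ∈ closedNeighborFinset G {k}, x i := Finset.sum_nonneg fun i _ => hx i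
    calc _ = (((closedNeighborFinset G {k}).card : ℝ) ^ 2 * x k + 2 *
            (closedNeighborFinset G {k}).card * ∑ i ∈ closedNeighborFinset G {k}, x i) / 3 := by
          simp_rw [← Finset.sum_div, Finset.sum_add_distrib, Finset.sum_const, nsmul_eq_mul,
            ← Finset.mul_sum]
          ring
      _ ≤ _ := by gcongr
  refine (Finset.sum_le_sum fun k _ => hsum k).trans ?_
  rw [← Finset.sum_div, Finset.sum_add_distrib, ← Finset.mul_sum, ← Finset.mul_sum]
  linarith [mul_le_mul_of_nonneg_left (sum_sum_closedNeighborFinset_le hD hx)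
    (by positivity : (0 : ℝ) ≤ 2 * (D + 1))]

lemma sum_sum_sum_pair_mean_le (hD : ∀ k, G.degree k ≤ D) (hx : ∀ k, 0 ≤ x k) :
    ∑ k, ∑ j ∈ closedNeighborFinset G {k}, ∑ l ∈ closedNeighborFinset G {k, j},
      (x k + x j + x l) / 3 ≤ 2 * ((D + 1) ^ 2 * ∑ k, x k) := by
  set N := fun k => closedNeighborFinset G {k}
  have hunion : ∀ k j, ∑ l ∈ closedNeighborFinset G {k, j}, (x k + x j + x l) / 3 ≤
      ∑ l ∈ N k, (x k + x j + x l) / 3 + ∑ l ∈ N j, (x k + x j + x l) / 3 := by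
    intro k j
    rw [closedNeighborFinset_pair, ← Finset.sum_union_inter]
    refine le_add_of_nonneg_right (Finset.sum_nonneg fun l _ => ?_)
    linarith [hx k, hx j, hx l]
  have hswap : ∑ k, ∑ j ∈ N k, ∑ l ∈ N j, (x k + x j + x l) / 3 =
      ∑ j, ∑ k ∈ N j, ∑ l ∈ N j, (x j + x k + x l) / 3 := by
    refine (Finset.sum_comm' (s' := N) (t' := Finset.univ) fun _ _ => by
      simp [N, mem_closedNeighborFinset_singleton_comm]).trans ?_
    simp only [add_comm]
  calc _ ≤ ∑ k, ∑ j ∈ N k, (∑ l ∈ N k, (x k + x j + x l) / 3 +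
          ∑ l ∈ N j, (x k + x j + x l) / 3) :=
        Finset.sum_le_sum fun k _ => Finset.sum_le_sum fun j _ => hunion k j
    _ ≤ 2 * ((D + 1) ^ 2 * ∑ k, x k) := by
        rw [Finset.sum_congr rfl fun k _ => Finset.sum_add_distrib, Finset.sum_add_distrib, hswap]
        linarith [sum_sum_sum_mean_le hD hx]

end Sums

/-- The part of the sum of the `X i` that may depend on `(X k)_{k ∈ s}`. -/
def nbhdSum (G : SimpleGraph V) [DecidableRel G.Adj] (X : V → Ω → ℝ) (s : Finset V) (ω : Ω) : ℝ :=
  ∑ i ∈ closedNeighborFinset G s, X i ω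

lemma abs_nbhdSum_le (s : Finset V) (ω : Ω) :
    |nbhdSum G X s ω| ≤ ∑ i ∈ closedNeighborFinset G s, |X i ω| :=
  Finset.abs_sum_le_sum_abs _ _

lemma mul_nbhdSum_sq_le {X : V → Ω → ℝ} {a c : ℝ} (ha : 0 ≤ a) (hc : 0 ≤ c) (s : Finset V)
    (ω : Ω) :
    a * (c * nbhdSum G X s ω ^ 2) ≤ ∑ i ∈ closedNeighborFinset G s,
      ∑ j ∈ closedNeighborFinset G s, a * |X i ω| * |X j ω| * c := by
  calc a * (c * nbhdSum G X s ω ^ 2)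
      ≤ a * (c * (∑ i ∈ closedNeighborFinset G s, |X i ω|) ^ 2) := by
        rw [← sq_abs (nbhdSum G X s ω)]
        gcongr
        exact abs_nbhdSum_le s ω
    _ = _ := by
        simp_rw [sq, Finset.sum_mul_sum, Finset.mul_sum]
        exact Finset.sum_congr rfl fun i _ => Finset.sum_congr rfl fun j _ => by ring

end Neighbourhood

section Dependency

variable {Ω V : Type*} {X : V → Ω → ℝ}

/-- The σ-algebra on `Ω` generated by the subfamily `(X i)_{i ∈ s}`. -/
abbrev sigmaOf (X : V → Ω → ℝ) (s : Set V) : MeasurableSpace Ω :=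
  .comap (fun ω (i : s) => X i ω) inferInstance

lemma measurable_sigmaOf {s : Set V} {i : V} (hi : i ∈ s) : Measurable[sigmaOf X s] (X i) :=
  (measurable_pi_apply (⟨i, hi⟩ : s)).comp (comap_measurable fun ω (i : s) => X i ω)

variable [mΩ : MeasurableSpace Ω] {μ : Measure Ω} {G : SimpleGraph V}

lemma sigmaOf_le (hmeas : ∀ k, Measurable (X k)) (s : Set V) : sigmaOf X s ≤ mΩ :=
  (measurable_pi_lambda _ fun i : s => hmeas i).comap_le

lemma IsDependencyGraph.comp {E F : Type*} [MeasurableSpace E] [MeasurableSpace F]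
    {Y : V → Ω → E} (hY : IsDependencyGraph μ G Y) {g : V → E → F} (hg : ∀ k, Measurable (g k)) :
    IsDependencyGraph μ G fun k ω => g k (Y k ω) := by
  intro V₁ V₂ hdisj hadj
  have hmeas : ∀ s : Set V, Measurable fun (y : s → E) i => g i.1 (y i) := fun s =>
    measurable_pi_lambda _ fun i => (hg i.1).comp (measurable_pi_apply i)
  exact (hY V₁ V₂ hdisj hadj).comp (hmeas V₁) (hmeas V₂)

lemma IsDependencyGraph.indepFun_of_measurable_sigmaOf (hX : IsDependencyGraph μ G X)
    {s t : Set V} (hdisj : Disjoint s t) (hadj : ∀ i ∈ s, ∀ j ∈ t, ¬ G.Adj i j) {U Q : Ω → ℝ}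
    (hU : Measurable[sigmaOf X s] U) (hQ : Measurable[sigmaOf X t] Q) : IndepFun U Q μ := by
  rw [IndepFun_iff_Indep]
  exact indep_of_indep_of_le_right (indep_of_indep_of_le_left
    ((IndepFun_iff_Indep _ _ _).mp (hX s t hdisj hadj)) hU.comap_le) hQ.comap_le

/-- The random variable `Z - E[Z]`. -/
def centred (μ : Measure Ω) (Z : Ω → ℝ) (ω : Ω) : ℝ := Z ω - ∫ ω', Z ω' ∂μ

lemma measurable_centred_sigmaOf {s : Set V} {i : V} (hi : i ∈ s) :
    Measurable[sigmaOf X s] (centred μ (X i)) :=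
  (measurable_sigmaOf hi).sub_const _

variable [Fintype V] [DecidableEq V] [DecidableRel G.Adj]

/-- The sum of the centred variables `X k - E[X k]`. -/
def centredSum (μ : Measure Ω) (X : V → Ω → ℝ) (ω : Ω) : ℝ := ∑ k, centred μ (X k) ω

lemma centredSum_sub_nbhdSum (s : Finset V) (ω : Ω) :
    centredSum μ X ω - nbhdSum G X s ω =
      ∑ i ∈ (closedNeighborFinset G s)ᶜ, X i ω - ∑ k, ∫ ω', X k ω' ∂μ := by
  simp only [centredSum, centred, nbhdSum, Finset.sum_sub_distrib,
    ← Finset.sum_add_sum_compl (closedNeighborFinset G s) fun i => X i ω]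
  ring

lemma IsDependencyGraph.integral_mul_comp_centredSum_sub_nbhdSum (hX : IsDependencyGraph μ G X)
    (hmeas : ∀ k, Measurable (X k)) {s : Finset V} {U : Ω → ℝ} (hU : Measurable[sigmaOf X s] U)
    {q : ℝ → ℝ} (hq : Measurable q) :
    ∫ ω, U ω * q (centredSum μ X ω - nbhdSum G X s ω) ∂μ =
      (∫ ω, U ω ∂μ) * ∫ ω, q (centredSum μ X ω - nbhdSum G X s ω) ∂μ := by
  set t : Finset V := (closedNeighborFinset G s)ᶜ
  have hQ : Measurable[sigmaOf X t] fun ω => q (centredSum μ X ω - nbhdSum G X s ω) := by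
    simp only [centredSum_sub_nbhdSum]
    exact hq.comp ((Finset.measurable_sum t fun i hi =>
      measurable_sigmaOf (Finset.mem_coe.mpr hi)).sub_const _)
  have hfar : ∀ i ∈ s, ∀ j ∈ t, j ≠ i ∧ ¬ G.Adj i j := fun i hi j hj =>
    not_or.mp fun h => Finset.mem_compl.mp hj (mem_closedNeighborFinset.mpr ⟨i, hi, h⟩)
  have hindep := hX.indepFun_of_measurable_sigmaOf (s := s) (t := t)
    (disjoint_left.mpr fun i hi hj => (hfar i hi i hj).1 rfl)
    (fun i hi j hj => (hfar i hi j hj).2) hU hQ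
  exact hindep.integral_fun_mul_eq_mul_integral
    (hU.mono (sigmaOf_le hmeas _) le_rfl).aestronglyMeasurable
    (hQ.mono (sigmaOf_le hmeas _) le_rfl).aestronglyMeasurable

end Dependency

section BoundedVariables

variable {Ω : Type*} [MeasurableSpace Ω] {μ : Measure Ω}

lemma memLp_top_mul {f g : Ω → ℝ} (hf : MemLp f ∞ μ) (hg : MemLp g ∞ μ) :
    MemLp (fun ω => f ω * g ω) ∞ μ :=
  hg.mul' hf

lemma memLp_top_abs {f : Ω → ℝ} (hf : MemLp f ∞ μ) : MemLp (fun ω => |f ω|) ∞ μ := hf.abs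

lemma memLp_top_comp {Z : Ω → ℝ} (hZ : AEMeasurable Z μ) {q : ℝ → ℝ} (hq : Measurable q) {C : ℝ}
    (hC : ∀ x, |q x| ≤ C) : MemLp (fun ω => q (Z ω)) ∞ μ :=
  memLp_top_of_bound (hq.comp_aemeasurable hZ).aestronglyMeasurable C
    (ae_of_all _ fun ω => hC (Z ω))

lemma memLp_top_steinWeight [IsFiniteMeasure μ] {Z : Ω → ℝ} (hZ : MemLp Z ∞ μ) (z ε ρ : ℝ) :
    MemLp (fun ω => steinWeight z ε ρ (Z ω)) ∞ μ := by
  have hindicator : MemLp (fun ω => (Ioc (z - ρ) (z + ε + ρ)).indicator (1 : ℝ → ℝ) (Z ω)) ∞ μ :=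
    memLp_top_comp hZ.aemeasurable (measurable_one.indicator measurableSet_Ioc) (C := 1)
      fun x => by by_cases hx : x ∈ Ioc (z - ρ) (z + ε + ρ) <;> simp [hx]
  exact (((memLp_const (√(Real.pi / 2))).add hZ.abs).add (memLp_const ρ)).add
    (hindicator.const_mul ε⁻¹)

/-- The average of `|Z|` and its mean, which dominates half of `|Z - E[Z]|` without increasing the
third absolute moment. -/
def avgAbs (μ : Measure Ω) (Z : Ω → ℝ) (ω : Ω) : ℝ := (|Z ω| + ∫ ω', |Z ω'| ∂μ) / 2

/-- The third absolute moment `E[|Z|³]`. -/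
def thirdMoment (μ : Measure Ω) (Z : Ω → ℝ) : ℝ := ∫ ω, |Z ω| ^ 3 ∂μ

lemma thirdMoment_nonneg (Z : Ω → ℝ) : 0 ≤ thirdMoment μ Z :=
  integral_nonneg fun _ => by positivity

lemma avgAbs_nonneg (Z : Ω → ℝ) (ω : Ω) : 0 ≤ avgAbs μ Z ω :=
  div_nonneg (add_nonneg (abs_nonneg _) (integral_nonneg fun _ => abs_nonneg _)) zero_le_two

lemma measurable_avgAbs_sigmaOf {V : Type*} {X : V → Ω → ℝ} {s : Set V} {i : V} (hi : i ∈ s) :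
    Measurable[sigmaOf X s] (avgAbs μ (X i)) :=
  ((measurable_abs.comp (measurable_sigmaOf hi)).add_const _).div_const 2

lemma abs_centred_le (Z : Ω → ℝ) (ω : Ω) : |centred μ Z ω| ≤ 2 * avgAbs μ Z ω := by
  have hmean : |∫ ω', Z ω' ∂μ| ≤ ∫ ω', |Z ω'| ∂μ := abs_integral_le_integral_abs
  unfold centred avgAbs
  linarith [abs_sub (Z ω) (∫ ω', Z ω' ∂μ)]

lemma abs_centred_le_add_integral {Z P : Ω → ℝ} (hP : Integrable P μ) (hZP : ∀ ω, |Z ω| ≤ P ω)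
    (ω : Ω) : |centred μ Z ω| ≤ P ω + ∫ ω', P ω' ∂μ := by
  have hmean : ‖∫ ω', Z ω' ∂μ‖ ≤ ∫ ω', P ω' ∂μ := norm_integral_le_of_norm_le hP (ae_of_all _ hZP)
  exact (abs_sub _ _).trans (add_le_add (hZP ω) hmean)

lemma memLp_abs_pow_three {Z : Ω → ℝ} (hZ : MemLp Z ∞ μ) : MemLp (fun ω => |Z ω| ^ 3) ∞ μ := by
  have habs := memLp_top_abs hZ
  simpa only [pow_succ, pow_zero, one_mul] using memLp_top_mul (memLp_top_mul habs habs) habs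

lemma mul_mul_le_add_pow_three_div {a b c : ℝ} (ha : 0 ≤ a) (hb : 0 ≤ b) (hc : 0 ≤ c) :
    a * b * c ≤ (a ^ 3 + b ^ 3 + c ^ 3) / 3 := by
  have hmean := Real.geom_mean_le_arith_mean3_weighted (w₁ := 1 / 3) (w₂ := 1 / 3) (w₃ := 1 / 3)
    (by norm_num) (by norm_num) (by norm_num) (pow_nonneg ha 3) (pow_nonneg hb 3)
    (pow_nonneg hc 3) (by norm_num)
  have hroot : ∀ {x : ℝ}, 0 ≤ x → (x ^ 3) ^ (1 / 3 : ℝ) = x := fun hx => by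
    simpa using Real.pow_rpow_inv_natCast hx (n := 3) (by norm_num)
  rw [hroot ha, hroot hb, hroot hc] at hmean
  linarith

lemma integral_mul_mul_le_thirdMoment [IsFiniteMeasure μ] {A B C : Ω → ℝ} (hA : MemLp A ∞ μ)
    (hB : MemLp B ∞ μ) (hC : MemLp C ∞ μ) :
    ∫ ω, |A ω| * |B ω| * |C ω| ∂μ ≤
      (thirdMoment μ A + thirdMoment μ B + thirdMoment μ C) / 3 := by
  have hA₃ := (memLp_abs_pow_three hA).integrable le_top
  have hB₃ := (memLp_abs_pow_three hB).integrable le_top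
  have hC₃ := (memLp_abs_pow_three hC).integrable le_top
  have hAB₃ : Integrable (fun ω => |A ω| ^ 3 + |B ω| ^ 3) μ := hA₃.add hB₃
  calc ∫ ω, |A ω| * |B ω| * |C ω| ∂μ
      ≤ ∫ ω, (|A ω| ^ 3 + |B ω| ^ 3 + |C ω| ^ 3) / 3 ∂μ := by
        refine integral_mono ((memLp_top_mul (memLp_top_mul (memLp_top_abs hA) (memLp_top_abs hB))
          (memLp_top_abs hC)).integrable le_top) ((hAB₃.add hC₃).div_const 3) fun ω =>
          mul_mul_le_add_pow_three_div (abs_nonneg _) (abs_nonneg _) (abs_nonneg _)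
    _ = (thirdMoment μ A + thirdMoment μ B + thirdMoment μ C) / 3 := by
        rw [integral_div, integral_add hAB₃ hC₃, integral_add hA₃ hB₃]
        rfl

variable [IsProbabilityMeasure μ]

lemma memLp_centred {Z : Ω → ℝ} (hZ : MemLp Z ∞ μ) : MemLp (centred μ Z) ∞ μ :=
  hZ.sub (memLp_const _)

lemma integral_centred {Z : Ω → ℝ} (hZ : MemLp Z ∞ μ) : ∫ ω, centred μ Z ω ∂μ = 0 := by
  simp [centred, integral_sub (hZ.integrable le_top)]

lemma memLp_avgAbs {Z : Ω → ℝ} (hZ : MemLp Z ∞ μ) : MemLp (avgAbs μ Z) ∞ μ := by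
  have hsum : MemLp (fun ω => |Z ω| + ∫ ω', |Z ω'| ∂μ) ∞ μ := hZ.abs.add (memLp_const _)
  unfold avgAbs
  simpa only [div_eq_inv_mul] using hsum.const_mul 2⁻¹

lemma thirdMoment_avgAbs_le {Z : Ω → ℝ} (hZ : MemLp Z ∞ μ) :
    thirdMoment μ (avgAbs μ Z) ≤ thirdMoment μ Z := by
  have hcube := (memLp_abs_pow_three hZ).integrable le_top
  have hjensen : (∫ ω, |Z ω| ∂μ) ^ 3 ≤ ∫ ω, |Z ω| ^ 3 ∂μ :=
    (convexOn_pow 3).map_integral_le (continuousOn_pow 3) isClosed_Ici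
      (ae_of_all _ fun ω => mem_Ici.mpr (abs_nonneg (Z ω))) (hZ.abs.integrable le_top) hcube
  calc thirdMoment μ (avgAbs μ Z)
      ≤ ∫ ω, (|Z ω| ^ 3 + (∫ ω', |Z ω'| ∂μ) ^ 3) / 2 ∂μ := by
        refine integral_mono ((memLp_abs_pow_three (memLp_avgAbs hZ)).integrable le_top)
          ((hcube.add (integrable_const _)).div_const 2) fun ω => ?_
        have hpow := add_pow_le (abs_nonneg (Z ω))
          (integral_nonneg (μ := μ) fun ω' => abs_nonneg (Z ω')) 3
        simp only [abs_of_nonneg (avgAbs_nonneg Z ω)]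
        simp only [avgAbs, div_pow]
        norm_num at hpow ⊢
        linarith
    _ ≤ thirdMoment μ Z := by
        rw [integral_div, integral_add hcube (integrable_const _), integral_const, probReal_univ,
          one_smul]
        unfold thirdMoment
        linarith

lemma integral_add_integral_mul_abs {P Z : Ω → ℝ} (hP : MemLp P ∞ μ) (hZ : MemLp Z ∞ μ) :
    ∫ ω, (P ω + ∫ ω', P ω' ∂μ) * |Z ω| ∂μ = ∫ ω, P ω * (2 * avgAbs μ Z ω) ∂μ := by
  have hPZ := (memLp_top_mul hP (memLp_top_abs hZ)).integrable le_top
  simp only [avgAbs, mul_div_cancel₀ _ (two_ne_zero' ℝ), add_mul, mul_add]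
  rw [integral_add hPZ (((memLp_top_abs hZ).integrable le_top).const_mul _),
    integral_add hPZ ((hP.integrable le_top).mul_const _), integral_const_mul, integral_mul_const]

lemma integral_avgAbs_mul_mul_le {A B C : Ω → ℝ} (hA : MemLp A ∞ μ) (hB : MemLp B ∞ μ)
    (hC : MemLp C ∞ μ) :
    ∫ ω, avgAbs μ A ω * |B ω| * |C ω| ∂μ ≤
      (thirdMoment μ A + thirdMoment μ B + thirdMoment μ C) / 3 := by
  have hmoment := integral_mul_mul_le_thirdMoment (memLp_avgAbs hA) hB hC
  simp only [abs_of_nonneg (avgAbs_nonneg A _)] at hmoment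
  linarith [thirdMoment_avgAbs_le hA]

lemma integral_avgAbs_mul_mul_avgAbs_le {A B C : Ω → ℝ} (hA : MemLp A ∞ μ) (hB : MemLp B ∞ μ)
    (hC : MemLp C ∞ μ) :
    ∫ ω, avgAbs μ A ω * |B ω| * avgAbs μ C ω ∂μ ≤
      (thirdMoment μ A + thirdMoment μ B + thirdMoment μ C) / 3 := by
  have hmoment := integral_avgAbs_mul_mul_le hA hB (memLp_avgAbs hC)
  simp only [abs_of_nonneg (avgAbs_nonneg C _)] at hmoment
  linarith [thirdMoment_avgAbs_le hC]

end BoundedVariables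

lemma abs_steinSolution_ramp_taylor_le {z ε ρ : ℝ} (hε : 0 < ε) {w T : ℝ} (hT : |T| ≤ ρ) :
    |steinSolution (ramp z ε) w - steinSolution (ramp z ε) (w - T) -
        T * deriv (steinSolution (ramp z ε)) w| ≤ steinWeight z ε ρ w * T ^ 2 := by
  set f := steinSolution (ramp z ε)
  have hρ : 0 ≤ ρ := (abs_nonneg T).trans hT
  have hderiv : ∀ u, HasDerivAt (fun u => f u - u * deriv f w) (deriv f u - 1 * deriv f w) u :=
    fun u => (hasDerivAt_steinSolution (continuous_ramp z ε) (integrable_of_continuous_of_mem_Icc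
      (continuous_ramp z ε) (ramp_mem_Icc z ε)) u).differentiableAt.hasDerivAt.sub
      ((hasDerivAt_id u).mul_const _)
  have hbound : ∀ u ∈ Metric.closedBall w |T|,
      ‖deriv f u - 1 * deriv f w‖ ≤ steinWeight z ε ρ w * |T| := by
    intro u hu
    have hu' : |u - w| ≤ |T| := by simpa [Real.dist_eq] using hu
    rw [one_mul]
    exact (abs_deriv_steinSolution_ramp_sub_le hε (hu'.trans hT) (by simpa using hρ)).trans
      (mul_le_mul_of_nonneg_left hu' (steinWeight_nonneg hε hρ w))
  have hmvt := (convex_closedBall w |T|).norm_image_sub_le_of_norm_hasDerivWithin_le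
    (fun u _ => (hderiv u).hasDerivWithinAt) hbound (x := w - T) (y := w)
    (by simp) (by simp)
  calc |f w - f (w - T) - T * deriv f w|
      = ‖f w - w * deriv f w - (f (w - T) - (w - T) * deriv f w)‖ := by
        rw [Real.norm_eq_abs]
        ring_nf
    _ ≤ steinWeight z ε ρ w * |T| * |T| := by simpa using hmvt
    _ = steinWeight z ε ρ w * T ^ 2 := by rw [mul_assoc, ← sq, sq_abs]

lemma continuous_steinSolution_ramp (z ε : ℝ) : Continuous (steinSolution (ramp z ε)) :=
  continuous_iff_continuousAt.mpr fun w => (hasDerivAt_steinSolution (continuous_ramp z ε)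
    (integrable_of_continuous_of_mem_Icc (continuous_ramp z ε) (ramp_mem_Icc z ε)) w).continuousAt

lemma memLp_top_steinSolution_ramp {Ω : Type*} [MeasurableSpace Ω] {μ : Measure Ω} {Z : Ω → ℝ}
    (hZ : AEMeasurable Z μ) (z ε : ℝ) :
    MemLp (fun ω => steinSolution (ramp z ε) (Z ω)) ∞ μ :=
  memLp_top_comp hZ (continuous_steinSolution_ramp z ε).measurable
    fun w => (steinSolution_bounds (continuous_ramp z ε) (ramp_mem_Icc z ε) w).1

lemma memLp_top_deriv_steinSolution_ramp {Ω : Type*} [MeasurableSpace Ω] {μ : Measure Ω}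
    {Z : Ω → ℝ} (hZ : AEMeasurable Z μ) (z ε : ℝ) :
    MemLp (fun ω => deriv (steinSolution (ramp z ε)) (Z ω)) ∞ μ :=
  memLp_top_comp hZ (measurable_deriv _)
    fun w => abs_deriv_steinSolution_le (continuous_ramp z ε) (ramp_mem_Icc z ε) w

/-- A family of random variables, uniformly bounded by `β`, with a dependency graph of maximal
degree at most `D`. -/
structure BoundedDependentFamily {Ω V : Type*} [MeasurableSpace Ω] [Fintype V]
    (μ : Measure Ω) (G : SimpleGraph V) [DecidableRel G.Adj] (X : V → Ω → ℝ) (D : ℕ) (β : ℝ) :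
    Prop where
  isDependencyGraph : IsDependencyGraph μ G X
  measurable : ∀ k, Measurable (X k)
  degree_le : ∀ k, G.degree k ≤ D
  bound_nonneg : 0 ≤ β
  abs_le : ∀ k, ∀ᵐ ω ∂μ, |X k ω| ≤ β

namespace BoundedDependentFamily

variable {Ω V : Type*} [MeasurableSpace Ω] [Fintype V] {μ : Measure Ω} {G : SimpleGraph V}
  [DecidableRel G.Adj] {X : V → Ω → ℝ} {D : ℕ} {β : ℝ}

lemma memLp (H : BoundedDependentFamily μ G X D β) (k : V) : MemLp (X k) ∞ μ :=
  memLp_top_of_bound (H.measurable k).aestronglyMeasurable β (H.abs_le k)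

lemma memLp_centredSum [IsProbabilityMeasure μ] (H : BoundedDependentFamily μ G X D β) :
    MemLp (centredSum μ X) ∞ μ :=
  memLp_finsetSum _ fun k _ => memLp_centred (H.memLp k)

lemma memLp_nbhdSum [DecidableEq V] (H : BoundedDependentFamily μ G X D β) (s : Finset V) :
    MemLp (nbhdSum G X s) ∞ μ :=
  memLp_finsetSum _ fun k _ => H.memLp k

lemma abs_nbhdSum_le [DecidableEq V] (H : BoundedDependentFamily μ G X D β) {s : Finset V} {n : ℕ}
    (hs : s.card ≤ n) : ∀ᵐ ω ∂μ, |nbhdSum G X s ω| ≤ n * ((D + 1) * β) := by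
  have hcard : ((closedNeighborFinset G s).card : ℝ) ≤ n * (D + 1) := by
    exact_mod_cast (card_closedNeighborFinset_le H.degree_le s).trans
      (Nat.mul_le_mul_right (D + 1) hs)
  filter_upwards [ae_all_iff.mpr H.abs_le] with ω hω
  calc |nbhdSum G X s ω| ≤ ∑ i ∈ closedNeighborFinset G s, |X i ω| := _root_.abs_nbhdSum_le s ω
    _ ≤ (closedNeighborFinset G s).card * β := by
        simpa using Finset.sum_le_card_nsmul _ _ β fun i _ => hω i
    _ ≤ n * (D + 1) * β := mul_le_mul_of_nonneg_right hcard H.bound_nonneg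
    _ = n * ((D + 1) * β) := mul_assoc _ _ _

variable {z ε K : ℝ}

lemma nonneg_of_integral_steinWeight_le (H : BoundedDependentFamily μ G X D β) (hε : 0 < ε)
    (hK : ∫ ω, steinWeight z ε (8 * ((D + 1) * β)) (centredSum μ X ω) ∂μ ≤ K) : 0 ≤ K := by
  have hβ := H.bound_nonneg
  exact (integral_nonneg fun ω => steinWeight_nonneg hε (by positivity) _).trans hK

variable [IsProbabilityMeasure μ]

lemma integral_mul_steinWeight_le (H : BoundedDependentFamily μ G X D β) {ρ : ℝ} (hε : 0 < ε)
    {s : Finset V} {n : ℕ} (hs : s.card ≤ n) {U : Ω → ℝ} (hU : Measurable[sigmaOf X s] U)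
    (hU_nonneg : ∀ ω, 0 ≤ U ω) (hU_bdd : MemLp U ∞ μ) :
    ∫ ω, U ω * steinWeight z ε ρ (centredSum μ X ω) ∂μ ≤
      (∫ ω, steinWeight z ε (ρ + 2 * (n * ((D + 1) * β))) (centredSum μ X ω) ∂μ) *
        ∫ ω, U ω ∂μ := by
  classical
  set W := centredSum μ X
  set T := nbhdSum G X s
  set r := n * ((D + 1) * β)
  have hW := memLp_top_steinWeight H.memLp_centredSum
  have hWT := memLp_top_steinWeight (H.memLp_centredSum.sub (H.memLp_nbhdSum s))
  have hT := H.abs_nbhdSum_le hs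
  calc ∫ ω, U ω * steinWeight z ε ρ (W ω) ∂μ
      ≤ ∫ ω, U ω * steinWeight z ε (ρ + r) (W ω - T ω) ∂μ := by
        refine integral_mono_ae ((memLp_top_mul hU_bdd (hW _ _ _)).integrable le_top)
          ((memLp_top_mul hU_bdd (hWT _ _ _)).integrable le_top) ?_
        filter_upwards [hT] with ω hω
        exact mul_le_mul_of_nonneg_left
          (steinWeight_le_of_abs_sub_le hε (by rwa [sub_sub_cancel])) (hU_nonneg ω)
    _ = (∫ ω, U ω ∂μ) * ∫ ω, steinWeight z ε (ρ + r) (W ω - T ω) ∂μ :=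
        H.isDependencyGraph.integral_mul_comp_centredSum_sub_nbhdSum H.measurable hU
          measurable_steinWeight
    _ ≤ (∫ ω, U ω ∂μ) * ∫ ω, steinWeight z ε (ρ + 2 * r) (W ω) ∂μ := by
        refine mul_le_mul_of_nonneg_left ?_ (integral_nonneg hU_nonneg)
        refine integral_mono_ae ((hWT _ _ _).integrable le_top) ((hW _ _ _).integrable le_top) ?_
        filter_upwards [hT] with ω hω
        rw [two_mul, ← add_assoc]
        exact steinWeight_le_of_abs_sub_le hε (by rwa [sub_sub_cancel_left, abs_neg])
    _ = _ := mul_comm _ _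

lemma integral_mul_steinWeight_le_of_card_le_three (H : BoundedDependentFamily μ G X D β)
    (hε : 0 < ε) (hK : ∫ ω, steinWeight z ε (8 * ((D + 1) * β)) (centredSum μ X ω) ∂μ ≤ K)
    {s : Finset V} (hs : s.card ≤ 3) {U : Ω → ℝ} (hU : Measurable[sigmaOf X s] U)
    (hU_nonneg : ∀ ω, 0 ≤ U ω) (hU_bdd : MemLp U ∞ μ) :
    ∫ ω, U ω * steinWeight z ε (2 * ((D + 1) * β)) (centredSum μ X ω) ∂μ ≤ K * ∫ ω, U ω ∂μ := by
  refine (H.integral_mul_steinWeight_le hε hs hU hU_nonneg hU_bdd).trans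
    (mul_le_mul_of_nonneg_right (le_of_eq_of_le ?_ hK) (integral_nonneg hU_nonneg))
  congr! 3
  push_cast
  ring

lemma integral_mul_mul_steinWeight_le (H : BoundedDependentFamily μ G X D β) (hε : 0 < ε)
    (hK : ∫ ω, steinWeight z ε (8 * ((D + 1) * β)) (centredSum μ X ω) ∂μ ≤ K) (k i j : V) :
    ∫ ω, 2 * avgAbs μ (X k) ω * |X i ω| * |X j ω| *
        steinWeight z ε (2 * ((D + 1) * β)) (centredSum μ X ω) ∂μ ≤
      2 * K * ((thirdMoment μ (X k) + thirdMoment μ (X i) + thirdMoment μ (X j)) / 3) := by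
  classical
  have hbdd : MemLp (fun ω => 2 * avgAbs μ (X k) ω * |X i ω| * |X j ω|) ∞ μ :=
    memLp_top_mul (memLp_top_mul ((memLp_avgAbs (H.memLp k)).const_mul 2)
      (memLp_top_abs (H.memLp i))) (memLp_top_abs (H.memLp j))
  have hmeas : Measurable[sigmaOf X ({k, i, j} : Finset V)] fun ω =>
      2 * avgAbs μ (X k) ω * |X i ω| * |X j ω| :=
    (((measurable_avgAbs_sigmaOf (by simp)).const_mul 2).mul
      (measurable_abs.comp (measurable_sigmaOf (by simp)))).mul
      (measurable_abs.comp (measurable_sigmaOf (by simp)))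
  have hnonneg : ∀ ω, 0 ≤ 2 * avgAbs μ (X k) ω * |X i ω| * |X j ω| := fun ω => by
    have := avgAbs_nonneg (μ := μ) (X k) ω
    positivity
  have hfactor : ∫ ω, 2 * avgAbs μ (X k) ω * |X i ω| * |X j ω| ∂μ =
      2 * ∫ ω, avgAbs μ (X k) ω * |X i ω| * |X j ω| ∂μ := by
    simp only [mul_assoc, integral_const_mul]
  calc _ ≤ K * ∫ ω, 2 * avgAbs μ (X k) ω * |X i ω| * |X j ω| ∂μ :=
        H.integral_mul_steinWeight_le_of_card_le_three hε hK Finset.card_le_three hmeas hnonneg hbdd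
    _ = 2 * K * ∫ ω, avgAbs μ (X k) ω * |X i ω| * |X j ω| ∂μ := by
        rw [hfactor, ← mul_assoc, mul_comm K]
    _ ≤ _ := mul_le_mul_of_nonneg_left
        (integral_avgAbs_mul_mul_le (H.memLp k) (H.memLp i) (H.memLp j))
        (mul_nonneg zero_le_two (H.nonneg_of_integral_steinWeight_le hε hK))

lemma integral_add_integral_mul_steinWeight_le (H : BoundedDependentFamily μ G X D β) (hε : 0 < ε)
    (hK : ∫ ω, steinWeight z ε (8 * ((D + 1) * β)) (centredSum μ X ω) ∂μ ≤ K) (k j l : V) :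
    ∫ ω, (2 * avgAbs μ (X k) ω * |X j ω| + ∫ ω', 2 * avgAbs μ (X k) ω' * |X j ω'| ∂μ) * |X l ω| *
        steinWeight z ε (2 * ((D + 1) * β)) (centredSum μ X ω) ∂μ ≤
      4 * K * ((thirdMoment μ (X k) + thirdMoment μ (X j) + thirdMoment μ (X l)) / 3) := by
  classical
  set P := fun ω => 2 * avgAbs μ (X k) ω * |X j ω|
  have hP : MemLp P ∞ μ :=
    memLp_top_mul ((memLp_avgAbs (H.memLp k)).const_mul 2) (memLp_top_abs (H.memLp j))
  have hP_nonneg : ∀ ω, 0 ≤ P ω := fun ω =>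
    mul_nonneg (mul_nonneg zero_le_two (avgAbs_nonneg _ ω)) (abs_nonneg _)
  have hP_meas : Measurable[sigmaOf X ({k, j, l} : Finset V)] P :=
    ((measurable_avgAbs_sigmaOf (by simp)).const_mul 2).mul
      (measurable_abs.comp (measurable_sigmaOf (by simp)))
  have hdecouple := H.integral_mul_steinWeight_le_of_card_le_three hε hK
    (s := {k, j, l}) (U := fun ω => (P ω + ∫ ω', P ω' ∂μ) * |X l ω|) Finset.card_le_three
    ((hP_meas.add_const _).mul (measurable_abs.comp (measurable_sigmaOf (by simp))))
    (fun ω => mul_nonneg (add_nonneg (hP_nonneg ω) (integral_nonneg hP_nonneg)) (abs_nonneg _))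
    (memLp_top_mul (hP.add (memLp_const _)) (memLp_top_abs (H.memLp l)))
  have hfactor : ∫ ω, P ω * (2 * avgAbs μ (X l) ω) ∂μ =
      4 * ∫ ω, avgAbs μ (X k) ω * |X j ω| * avgAbs μ (X l) ω ∂μ := by
    rw [← integral_const_mul]
    exact integral_congr_ae (ae_of_all _ fun ω => by ring)
  rw [integral_add_integral_mul_abs hP (H.memLp l), hfactor, mul_left_comm K,
    ← mul_assoc 4] at hdecouple
  exact hdecouple.trans (mul_le_mul_of_nonneg_left
    (integral_avgAbs_mul_mul_avgAbs_le (H.memLp k) (H.memLp j) (H.memLp l))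
    (mul_nonneg zero_le_four (H.nonneg_of_integral_steinWeight_le hε hK)))

lemma integral_centredSum_mul (H : BoundedDependentFamily μ G X D β) {Q : Ω → ℝ}
    (hQ : MemLp Q ∞ μ) :
    ∫ ω, centredSum μ X ω * Q ω ∂μ = ∑ k, ∫ ω, centred μ (X k) ω * Q ω ∂μ := by
  rw [← integral_finsetSum _ fun k _ =>
    (memLp_top_mul (memLp_centred (H.memLp k)) hQ).integrable le_top]
  simp only [centredSum, Finset.sum_mul]

section Decoupling

variable [DecidableEq V]

lemma integral_mul_comp_centredSum (H : BoundedDependentFamily μ G X D β) {s : Finset V}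
    {U : Ω → ℝ} (hU : Measurable[sigmaOf X s] U) (hU_bdd : MemLp U ∞ μ) (hU_mean : ∫ ω, U ω ∂μ = 0)
    {q : ℝ → ℝ} (hq : Measurable q) (hqW : MemLp (fun ω => q (centredSum μ X ω)) ∞ μ)
    (hqWT : MemLp (fun ω => q (centredSum μ X ω - nbhdSum G X s ω)) ∞ μ) :
    ∫ ω, U ω * q (centredSum μ X ω) ∂μ =
      ∫ ω, U ω * (q (centredSum μ X ω) - q (centredSum μ X ω - nbhdSum G X s ω)) ∂μ := by
  simp only [mul_sub]
  rw [integral_sub ((memLp_top_mul hU_bdd hqW).integrable le_top)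
    ((memLp_top_mul hU_bdd hqWT).integrable le_top),
    H.isDependencyGraph.integral_mul_comp_centredSum_sub_nbhdSum H.measurable hU hq, hU_mean,
    zero_mul, sub_zero]

lemma integral_mul_nbhdSum_mul (H : BoundedDependentFamily μ G X D β) {U Q : Ω → ℝ}
    (hU : MemLp U ∞ μ) (hQ : MemLp Q ∞ μ) (s : Finset V) :
    ∫ ω, U ω * (nbhdSum G X s ω * Q ω) ∂μ =
      ∑ j ∈ closedNeighborFinset G s, ∫ ω, U ω * X j ω * Q ω ∂μ := by
  rw [← integral_finsetSum _ fun j _ =>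
    (memLp_top_mul (memLp_top_mul hU (H.memLp j)) hQ).integrable le_top]
  simp only [nbhdSum, Finset.sum_mul, Finset.mul_sum, mul_assoc]

lemma integral_centredSum_mul_self (H : BoundedDependentFamily μ G X D β) :
    ∫ ω, centredSum μ X ω * centredSum μ X ω ∂μ =
      ∑ k, ∑ j ∈ closedNeighborFinset G {k}, ∫ ω, centred μ (X k) ω * X j ω ∂μ := by
  rw [H.integral_centredSum_mul H.memLp_centredSum]
  refine Finset.sum_congr rfl fun k _ => ?_
  have hlocal := H.integral_mul_comp_centredSum (s := {k}) (measurable_centred_sigmaOf (by simp))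
    (memLp_centred (H.memLp k)) (integral_centred (H.memLp k)) measurable_id H.memLp_centredSum
    (H.memLp_centredSum.sub (H.memLp_nbhdSum _))
  simp only [id, sub_sub_cancel] at hlocal
  simpa [hlocal] using H.integral_mul_nbhdSum_mul (memLp_centred (H.memLp k)) (memLp_const 1) {k}

lemma integral_centred_mul_steinSolution_sub_eq (H : BoundedDependentFamily μ G X D β) (k : V) :
    ∫ ω, centred μ (X k) ω * steinSolution (ramp z ε) (centredSum μ X ω) ∂μ -
        ∑ j ∈ closedNeighborFinset G {k}, ∫ ω, centred μ (X k) ω * X j ω *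
          deriv (steinSolution (ramp z ε)) (centredSum μ X ω) ∂μ =
      ∫ ω, centred μ (X k) ω * (steinSolution (ramp z ε) (centredSum μ X ω) -
        steinSolution (ramp z ε) (centredSum μ X ω - nbhdSum G X {k} ω) -
        nbhdSum G X {k} ω * deriv (steinSolution (ramp z ε)) (centredSum μ X ω)) ∂μ := by
  have hη := memLp_centred (H.memLp k)
  have hW := H.memLp_centredSum
  have hT := H.memLp_nbhdSum {k}
  have hfW := memLp_top_steinSolution_ramp hW.aemeasurable z ε
  have hfWT : MemLp (fun ω =>
      steinSolution (ramp z ε) (centredSum μ X ω - nbhdSum G X {k} ω)) ∞ μ :=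
    memLp_top_steinSolution_ramp (hW.sub hT).aemeasurable z ε
  have hderiv := memLp_top_deriv_steinSolution_ramp hW.aemeasurable z ε
  rw [← H.integral_mul_nbhdSum_mul hη hderiv, H.integral_mul_comp_centredSum (s := {k})
    (measurable_centred_sigmaOf (by simp)) hη (integral_centred (H.memLp k))
    (continuous_steinSolution_ramp z ε).measurable hfW hfWT]
  rw [← integral_sub (f := fun ω => centred μ (X k) ω * (steinSolution (ramp z ε)
    (centredSum μ X ω) - steinSolution (ramp z ε) (centredSum μ X ω - nbhdSum G X {k} ω)))
    ((memLp_top_mul hη (hfW.sub hfWT)).integrable le_top)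
    ((memLp_top_mul hη (memLp_top_mul hT hderiv)).integrable le_top)]
  simp only [mul_sub]

lemma abs_integral_centred_mul_steinSolution_sub_le (H : BoundedDependentFamily μ G X D β)
    (hε : 0 < ε) (hK : ∫ ω, steinWeight z ε (8 * ((D + 1) * β)) (centredSum μ X ω) ∂μ ≤ K)
    (k : V) :
    |∫ ω, centred μ (X k) ω * steinSolution (ramp z ε) (centredSum μ X ω) ∂μ -
        ∑ j ∈ closedNeighborFinset G {k}, ∫ ω, centred μ (X k) ω * X j ω *
          deriv (steinSolution (ramp z ε)) (centredSum μ X ω) ∂μ| ≤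
      ∑ i ∈ closedNeighborFinset G {k}, ∑ j ∈ closedNeighborFinset G {k},
        2 * K * ((thirdMoment μ (X k) + thirdMoment μ (X i) + thirdMoment μ (X j)) / 3) := by
  set b := (D + 1) * β
  have hb : 0 ≤ b := mul_nonneg (by positivity) H.bound_nonneg
  set N := closedNeighborFinset G {k}
  set F : V → V → Ω → ℝ := fun i j ω =>
    2 * avgAbs μ (X k) ω * |X i ω| * |X j ω| * steinWeight z ε (2 * b) (centredSum μ X ω)
  have hF : ∀ i j, Integrable (F i j) μ := fun i j =>
    (memLp_top_mul (memLp_top_mul (memLp_top_mul ((memLp_avgAbs (H.memLp k)).const_mul 2)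
      (memLp_top_abs (H.memLp i))) (memLp_top_abs (H.memLp j)))
      (memLp_top_steinWeight H.memLp_centredSum _ _ _)).integrable le_top
  have hsumF : ∀ i, Integrable (fun ω => ∑ j ∈ N, F i j ω) μ := fun i =>
    integrable_finsetSum _ fun j _ => hF i j
  rw [H.integral_centred_mul_steinSolution_sub_eq, ← Real.norm_eq_abs]
  calc _ ≤ ∫ ω, ∑ i ∈ N, ∑ j ∈ N, F i j ω ∂μ := by
        refine norm_integral_le_of_norm_le (integrable_finsetSum _ fun i _ => hsumF i) ?_
        filter_upwards [H.abs_nbhdSum_le (s := {k}) (Finset.card_singleton k).le] with ω hω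
        have hT : |nbhdSum G X {k} ω| ≤ 2 * b := by push_cast at hω; linarith
        rw [Real.norm_eq_abs, abs_mul]
        exact (mul_le_mul (abs_centred_le _ ω) (abs_steinSolution_ramp_taylor_le hε hT)
          (abs_nonneg _) (mul_nonneg zero_le_two (avgAbs_nonneg _ ω))).trans
          (mul_nbhdSum_sq_le (mul_nonneg zero_le_two (avgAbs_nonneg _ ω))
            (steinWeight_nonneg hε (by positivity) _) {k} ω)
    _ = ∑ i ∈ N, ∑ j ∈ N, ∫ ω, F i j ω ∂μ := by
        rw [integral_finsetSum _ fun i _ => hsumF i]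
        exact Finset.sum_congr rfl fun i _ => integral_finsetSum _ fun j _ => hF i j
    _ ≤ _ := Finset.sum_le_sum fun i _ => Finset.sum_le_sum fun j _ =>
        H.integral_mul_mul_steinWeight_le hε hK k i j

lemma integral_centred_mul_mul_deriv_steinSolution_sub_eq (H : BoundedDependentFamily μ G X D β)
    (k j : V) :
    ∫ ω, centred μ (X k) ω * X j ω * deriv (steinSolution (ramp z ε)) (centredSum μ X ω) ∂μ -
        (∫ ω, centred μ (X k) ω * X j ω ∂μ) *
          ∫ ω, deriv (steinSolution (ramp z ε)) (centredSum μ X ω) ∂μ =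
      ∫ ω, centred μ (fun ω => centred μ (X k) ω * X j ω) ω *
        (deriv (steinSolution (ramp z ε)) (centredSum μ X ω) -
          deriv (steinSolution (ramp z ε)) (centredSum μ X ω - nbhdSum G X {k, j} ω)) ∂μ := by
  have hηX := memLp_top_mul (memLp_centred (H.memLp k)) (H.memLp j)
  have hW := H.memLp_centredSum
  have hderiv := memLp_top_deriv_steinSolution_ramp hW.aemeasurable z ε
  have hmeas : Measurable[sigmaOf X ({k, j} : Finset V)]
      (centred μ fun ω => centred μ (X k) ω * X j ω) :=
    ((measurable_centred_sigmaOf (by simp)).mul (measurable_sigmaOf (by simp))).sub_const _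
  rw [← H.integral_mul_comp_centredSum hmeas (memLp_centred hηX) (integral_centred hηX)
    (measurable_deriv _) hderiv
    (memLp_top_deriv_steinSolution_ramp (hW.sub (H.memLp_nbhdSum _)).aemeasurable z ε),
    ← integral_const_mul, ← integral_sub ((memLp_top_mul hηX hderiv).integrable le_top)
    ((hderiv.integrable le_top).const_mul _)]
  simp only [centred, sub_mul]

lemma abs_integral_centred_mul_mul_deriv_steinSolution_sub_le
    (H : BoundedDependentFamily μ G X D β) (hε : 0 < ε)
    (hK : ∫ ω, steinWeight z ε (8 * ((D + 1) * β)) (centredSum μ X ω) ∂μ ≤ K) (k j : V) :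
    |∫ ω, centred μ (X k) ω * X j ω * deriv (steinSolution (ramp z ε)) (centredSum μ X ω) ∂μ -
        (∫ ω, centred μ (X k) ω * X j ω ∂μ) *
          ∫ ω, deriv (steinSolution (ramp z ε)) (centredSum μ X ω) ∂μ| ≤
      ∑ l ∈ closedNeighborFinset G {k, j},
        4 * K * ((thirdMoment μ (X k) + thirdMoment μ (X j) + thirdMoment μ (X l)) / 3) := by
  set b := (D + 1) * β
  have hb : 0 ≤ b := mul_nonneg (by positivity) H.bound_nonneg
  set N := closedNeighborFinset G {k, j}
  set P := fun ω => 2 * avgAbs μ (X k) ω * |X j ω|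
  have hP : MemLp P ∞ μ :=
    memLp_top_mul ((memLp_avgAbs (H.memLp k)).const_mul 2) (memLp_top_abs (H.memLp j))
  have hcentred : ∀ ω, |centred μ (fun ω => centred μ (X k) ω * X j ω) ω| ≤ P ω + ∫ ω', P ω' ∂μ :=
    abs_centred_le_add_integral (hP.integrable le_top) fun ω => by
      rw [abs_mul]
      exact mul_le_mul_of_nonneg_right (abs_centred_le _ ω) (abs_nonneg _)
  set F : V → Ω → ℝ := fun l ω => (P ω + ∫ ω', P ω' ∂μ) * |X l ω| *
    steinWeight z ε (2 * b) (centredSum μ X ω)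
  have hF : ∀ l, Integrable (F l) μ := fun l =>
    (memLp_top_mul (memLp_top_mul (hP.add (memLp_const _)) (memLp_top_abs (H.memLp l)))
      (memLp_top_steinWeight H.memLp_centredSum _ _ _)).integrable le_top
  rw [H.integral_centred_mul_mul_deriv_steinSolution_sub_eq, ← Real.norm_eq_abs]
  calc _ ≤ ∫ ω, ∑ l ∈ N, F l ω ∂μ := by
        refine norm_integral_le_of_norm_le (integrable_finsetSum _ fun l _ => hF l) ?_
        filter_upwards [H.abs_nbhdSum_le (s := {k, j}) Finset.card_le_two] with ω hω
        set T := nbhdSum G X {k, j} ω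
        have hweight := steinWeight_nonneg (z := z) hε (by positivity : 0 ≤ 2 * b)
          (centredSum μ X ω)
        have hLipschitz := abs_deriv_steinSolution_ramp_sub_le (z := z) hε (ρ := 2 * b)
          (w := centredSum μ X ω) (x := centredSum μ X ω) (y := centredSum μ X ω - T)
          (by simpa using hb) (by simpa using hω)
        rw [sub_sub_cancel] at hLipschitz
        rw [Real.norm_eq_abs, abs_mul, ← Finset.sum_mul, ← Finset.mul_sum, mul_assoc,
          mul_comm (∑ l ∈ N, _)]
        exact mul_le_mul (hcentred ω) (hLipschitz.trans
          (mul_le_mul_of_nonneg_left (_root_.abs_nbhdSum_le _ ω) hweight)) (abs_nonneg _)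
          ((abs_nonneg _).trans (hcentred ω))
    _ = ∑ l ∈ N, ∫ ω, F l ω ∂μ := integral_finsetSum _ fun l _ => hF l
    _ ≤ _ := Finset.sum_le_sum fun l _ => H.integral_add_integral_mul_steinWeight_le hε hK k j l

end Decoupling

lemma abs_integral_mul_integral_deriv_steinSolution_sub_le (H : BoundedDependentFamily μ G X D β)
    (hε : 0 < ε) (hK : ∫ ω, steinWeight z ε (8 * ((D + 1) * β)) (centredSum μ X ω) ∂μ ≤ K) :
    |∫ ω, centredSum μ X ω * steinSolution (ramp z ε) (centredSum μ X ω) ∂μ -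
        (∫ ω, centredSum μ X ω * centredSum μ X ω ∂μ) *
          ∫ ω, deriv (steinSolution (ramp z ε)) (centredSum μ X ω) ∂μ| ≤
      10 * K * ((D + 1) ^ 2 * ∑ k, thirdMoment μ (X k)) := by
  classical
  have hK0 := H.nonneg_of_integral_steinWeight_le hε hK
  set N := fun s => closedNeighborFinset G s
  set m := fun k => thirdMoment μ (X k)
  have hm : ∀ k, 0 ≤ m k := fun k => thirdMoment_nonneg (X k)
  set I := fun k => ∫ ω, centred μ (X k) ω * steinSolution (ramp z ε) (centredSum μ X ω) ∂μ
  set J := fun k j => ∫ ω, centred μ (X k) ω * X j ω *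
    deriv (steinSolution (ramp z ε)) (centredSum μ X ω) ∂μ
  set C := fun k j => (∫ ω, centred μ (X k) ω * X j ω ∂μ) *
    ∫ ω, deriv (steinSolution (ramp z ε)) (centredSum μ X ω) ∂μ
  have hlocal : ∀ k, |I k - ∑ j ∈ N {k}, C k j| ≤
      ∑ i ∈ N {k}, ∑ j ∈ N {k}, 2 * K * ((m k + m i + m j) / 3) +
        ∑ j ∈ N {k}, ∑ l ∈ N {k, j}, 4 * K * ((m k + m j + m l) / 3) := by
    intro k
    calc |I k - ∑ j ∈ N {k}, C k j|
        ≤ |I k - ∑ j ∈ N {k}, J k j| + |∑ j ∈ N {k}, (J k j - C k j)| := by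
          rw [Finset.sum_sub_distrib]
          exact abs_sub_le _ _ _
      _ ≤ _ := add_le_add (H.abs_integral_centred_mul_steinSolution_sub_le hε hK k)
          ((Finset.abs_sum_le_sum_abs _ _).trans (Finset.sum_le_sum fun j _ =>
            H.abs_integral_centred_mul_mul_deriv_steinSolution_sub_le hε hK k j))
  rw [H.integral_centredSum_mul (memLp_top_steinSolution_ramp H.memLp_centredSum.aemeasurable z ε),
    H.integral_centredSum_mul_self]
  simp only [Finset.sum_mul]
  rw [← Finset.sum_sub_distrib]
  refine ((Finset.abs_sum_le_sum_abs _ _).trans (Finset.sum_le_sum fun k _ => hlocal k)).trans ?_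
  simp only [Finset.sum_add_distrib, ← Finset.mul_sum]
  have hfirst := sum_sum_sum_mean_le H.degree_le hm
  have hsecond := sum_sum_sum_pair_mean_le H.degree_le hm
  linarith [mul_le_mul_of_nonneg_left hfirst (mul_nonneg zero_le_two hK0),
    mul_le_mul_of_nonneg_left hsecond (mul_nonneg zero_le_four hK0)]

end BoundedDependentFamily

section KolmogorovDistance

variable {Ω : Type*} [MeasurableSpace Ω] {μ : Measure Ω} [IsProbabilityMeasure μ] {Z : Ω → ℝ}
  {z ε : ℝ}

lemma abs_measureReal_sub_measureReal_le_one {Ω' : Type*} [MeasurableSpace Ω'] {ν : Measure Ω'}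
    [IsProbabilityMeasure ν] (s : Set Ω) (t : Set Ω') : |μ.real s - ν.real t| ≤ 1 :=
  abs_sub_le_of_nonneg_of_le measureReal_nonneg measureReal_le_one measureReal_nonneg
    measureReal_le_one

lemma dKolNormal_le_one : dKolNormal μ Z ≤ 1 :=
  ciSup_le fun _ => abs_measureReal_sub_measureReal_le_one _ _

lemma abs_measureReal_map_Iic_sub_le_dKolNormal (hZ : AEMeasurable Z μ) (t : ℝ) :
    |(μ.map Z).real (Iic t) - Measure.real γ (Iic t)| ≤ dKolNormal μ Z := by
  rw [map_measureReal_apply_of_aemeasurable hZ measurableSet_Iic]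
  exact le_ciSup (f := fun t => |(μ {ω | Z ω ≤ t}).toReal - (γ (Iic t)).toReal|)
    ⟨1, forall_mem_range.mpr fun _ => abs_measureReal_sub_measureReal_le_one _ _⟩ t

lemma measureReal_map_Ioc_le (hZ : AEMeasurable Z μ) {a b : ℝ} (hab : a ≤ b) :
    (μ.map Z).real (Ioc a b) ≤ 2 * dKolNormal μ Z + (√(2 * Real.pi))⁻¹ * (b - a) := by
  have hIoc : ∀ ν : Measure ℝ, IsFiniteMeasure ν →
      ν.real (Ioc a b) = ν.real (Iic b) - ν.real (Iic a) := fun ν _ => by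
    rw [← Iic_union_Ioc_eq_Iic hab, measureReal_union (Iic_disjoint_Ioc le_rfl) measurableSet_Ioc,
      add_sub_cancel_left]
  have hgaussian := measureReal_gaussianReal_zero_one_Ioc_le hab
  rw [hIoc _ inferInstance] at hgaussian ⊢
  linarith [(abs_le.mp (abs_measureReal_map_Iic_sub_le_dKolNormal hZ a)).1,
    (abs_le.mp (abs_measureReal_map_Iic_sub_le_dKolNormal hZ b)).2]

lemma dKolNormal_le_of_abs_integral_ramp_sub_le (hZ : AEMeasurable Z μ) (hε : 0 < ε) {B : ℝ}
    (hB : ∀ z, |∫ ω, ramp z ε (Z ω) ∂μ - ∫ x, ramp z ε x ∂γ| ≤ B) :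
    dKolNormal μ Z ≤ (√(2 * Real.pi))⁻¹ * (ε / 2) + B := by
  refine ciSup_le fun t => ?_
  have hlaw : (μ {ω | Z ω ≤ t}).toReal = (μ.map Z).real (Iic t) :=
    (map_measureReal_apply_of_aemeasurable hZ measurableSet_Iic).symm
  have hmap : ∀ z, ∫ ω, ramp z ε (Z ω) ∂μ = ∫ x, ramp z ε x ∂μ.map Z := fun z =>
    (integral_map hZ (continuous_ramp z ε).aestronglyMeasurable).symm
  have hupper := measureReal_Iic_le_integral_ramp hε (ν := μ.map Z) (z := t)
  have hlower := integral_ramp_le_measureReal_Iic hε (ν := μ.map Z) (z := t - ε)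
  have hgaussian_upper := integral_ramp_gaussianReal_sub_le hε (z := t)
  have hgaussian_lower := sub_integral_ramp_gaussianReal_le hε (z := t - ε)
  rw [sub_add_cancel] at hlower hgaussian_lower
  have hB_upper := (abs_le.mp (hB t)).2
  have hB_lower := (abs_le.mp (hB (t - ε))).1
  rw [hmap] at hB_upper hB_lower
  rw [hlaw]
  change |_ - Measure.real γ (Iic t)| ≤ _
  exact abs_le.mpr ⟨by linarith, by linarith⟩

lemma integral_abs_le_one (hZ : MemLp Z ∞ μ) (hvar : ∫ ω, Z ω * Z ω ∂μ = 1) :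
    ∫ ω, |Z ω| ∂μ ≤ 1 := by
  have hsq := (memLp_top_mul hZ hZ).integrable le_top
  calc ∫ ω, |Z ω| ∂μ ≤ ∫ ω, (1 + Z ω * Z ω) / 2 ∂μ :=
        integral_mono ((memLp_top_abs hZ).integrable le_top)
          (((integrable_const 1).add hsq).div_const 2) fun ω => by
            linarith [sq_nonneg (|Z ω| - 1), abs_mul_abs_self (Z ω)]
    _ = 1 := by
        rw [integral_div, integral_add (integrable_const 1) hsq, hvar]
        simp

lemma integral_steinWeight_le (hZ : MemLp Z ∞ μ) (hvar : ∫ ω, Z ω * Z ω ∂μ = 1) (hε : 0 < ε)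
    {ρ : ℝ} (hρ : 0 ≤ ρ) :
    ∫ ω, steinWeight z ε ρ (Z ω) ∂μ ≤ √(Real.pi / 2) + 1 + ρ +
      ε⁻¹ * (2 * dKolNormal μ Z + (√(2 * Real.pi))⁻¹ * (ε + 2 * ρ)) := by
  set s := Ioc (z - ρ) (z + ε + ρ)
  have habs : Integrable (fun ω => |Z ω|) μ := (memLp_top_abs hZ).integrable le_top
  have hconst_abs : Integrable (fun ω => √(Real.pi / 2) + |Z ω|) μ := (integrable_const _).add habs
  have hconst_abs_const : Integrable (fun ω => √(Real.pi / 2) + |Z ω| + ρ) μ :=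
    hconst_abs.add (integrable_const ρ)
  have hindicator : Integrable (fun ω => s.indicator (1 : ℝ → ℝ) (Z ω)) μ :=
    ((integrable_const 1).indicator measurableSet_Ioc).comp_aemeasurable hZ.aemeasurable
  have hmeasure : ∫ ω, s.indicator (1 : ℝ → ℝ) (Z ω) ∂μ = (μ.map Z).real s := by
    rw [← integral_map hZ.aemeasurable (f := s.indicator 1)
      (measurable_one.indicator measurableSet_Ioc).aestronglyMeasurable,
      integral_indicator_one measurableSet_Ioc]
  have hconcentration := measureReal_map_Ioc_le hZ.aemeasurable
    (show z - ρ ≤ z + ε + ρ by linarith)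
  rw [show z + ε + ρ - (z - ρ) = ε + 2 * ρ by ring] at hconcentration
  calc ∫ ω, steinWeight z ε ρ (Z ω) ∂μ
      = √(Real.pi / 2) + ∫ ω, |Z ω| ∂μ + ρ + ε⁻¹ * (μ.map Z).real s := by
        unfold steinWeight
        rw [integral_add hconst_abs_const (hindicator.const_mul _),
          integral_add hconst_abs (integrable_const _), integral_add (integrable_const _) habs,
          integral_const_mul, hmeasure]
        simp
    _ ≤ _ := by
        gcongr
        exact integral_abs_le_one hZ hvar

lemma integral_ramp_sub_integral_gaussianReal (hZ : MemLp Z ∞ μ) :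
    ∫ ω, ramp z ε (Z ω) ∂μ - ∫ x, ramp z ε x ∂γ =
      ∫ ω, deriv (steinSolution (ramp z ε)) (Z ω) ∂μ -
        ∫ ω, Z ω * steinSolution (ramp z ε) (Z ω) ∂μ := by
  have hcont := continuous_ramp z ε
  have hmem := ramp_mem_Icc z ε
  have hramp : Integrable (fun ω => ramp z ε (Z ω)) μ :=
    (integrable_of_continuous_of_mem_Icc (ν := μ.map Z) hcont hmem).comp_aemeasurable
      hZ.aemeasurable
  have hequation : ∀ ω, ramp z ε (Z ω) - ∫ x, ramp z ε x ∂γ =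
      deriv (steinSolution (ramp z ε)) (Z ω) - Z ω * steinSolution (ramp z ε) (Z ω) := fun ω => by
    rw [(hasDerivAt_steinSolution hcont (integrable_of_continuous_of_mem_Icc hcont hmem) _).deriv,
      add_sub_cancel_left]
  rw [← integral_sub
    ((memLp_top_deriv_steinSolution_ramp hZ.aemeasurable z ε).integrable le_top)
    ((memLp_top_mul hZ (memLp_top_steinSolution_ramp hZ.aemeasurable z ε)).integrable le_top)]
  simp only [← hequation]
  rw [integral_sub hramp (integrable_const _)]
  simp

end KolmogorovDistance

section Bootstrap

lemma sqrt_pi_div_two_le : √(Real.pi / 2) ≤ 1.26 :=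
  Real.sqrt_le_iff.mpr ⟨by norm_num, by linarith [Real.pi_lt_d2]⟩

lemma inv_sqrt_two_mul_pi_le : (√(2 * Real.pi))⁻¹ ≤ 0.4 := by
  have hsqrt : 2.5 ≤ √(2 * Real.pi) := Real.le_sqrt_of_sq_le (by linarith [Real.pi_gt_d2])
  exact (inv_anti₀ (by norm_num) hsqrt).trans (by norm_num)

-- The bound is applied with `ε` equal to `1.3` times the claimed maximum.
lemma le_max_of_forall_le_smoothing {δ a b : ℝ} (hδ : δ ≤ 1) (hb : 0 < b)
    (hsmooth : ∀ ε, 0 < ε →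
      δ ≤ 0.2 * ε + 10 * (2.26 + 8 * b + ε⁻¹ * (2 * δ + 0.4 * (ε + 16 * b))) * a) :
    δ ≤ max (68.5 * a) (22.88 * b) := by
  set M := max (68.5 * a) (22.88 * b)
  have haM : 68.5 * a ≤ M := le_max_left _ _
  have hbM : 22.88 * b ≤ M := le_max_right _ _
  have hM : 0 < M := by linarith
  by_contra! hδM
  set R := 2.26 + 8 * b + (1.3 * M)⁻¹ * (2 * δ + 0.4 * (1.3 * M + 16 * b))
  have hR_nonneg : 0 ≤ R := by
    have hδ_pos : 0 < δ := hM.trans hδM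
    positivity
  have hMR : 1.3 * (M * R) =
      1.3 * (2.26 * M + 8 * (b * M)) + (2 * δ + 0.4 * (1.3 * M + 16 * b)) := by
    unfold R
    field_simp
  have hbM_le : b * M ≤ b := mul_le_of_le_one_right hb.le (hδM.le.trans hδ)
  have hstep : δ ≤ 0.2 * (1.3 * M) + 10 * R * a := hsmooth (1.3 * M) (by positivity)
  have haR : 68.5 * a * R ≤ M * R := mul_le_mul_of_nonneg_right haM hR_nonneg
  linarith

end Bootstrap

namespace BoundedDependentFamily

variable {Ω V : Type*} [MeasurableSpace Ω] [Fintype V] {μ : Measure Ω} [IsProbabilityMeasure μ]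
  {G : SimpleGraph V} [DecidableRel G.Adj] {X : V → Ω → ℝ} {D : ℕ} {β : ℝ}

lemma abs_integral_ramp_centredSum_sub_le (H : BoundedDependentFamily μ G X D β)
    (hvar : ∫ ω, centredSum μ X ω * centredSum μ X ω ∂μ = 1) {ε : ℝ} (hε : 0 < ε) (z : ℝ) :
    |∫ ω, ramp z ε (centredSum μ X ω) ∂μ - ∫ x, ramp z ε x ∂γ| ≤
      10 * (√(Real.pi / 2) + 1 + 8 * ((D + 1) * β) + ε⁻¹ * (2 * dKolNormal μ (centredSum μ X) +
        (√(2 * Real.pi))⁻¹ * (ε + 2 * (8 * ((D + 1) * β))))) *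
        ((D + 1) ^ 2 * ∑ k, thirdMoment μ (X k)) := by
  have hβ := H.bound_nonneg
  have hexpansion := H.abs_integral_mul_integral_deriv_steinSolution_sub_le hε
    (integral_steinWeight_le (z := z) H.memLp_centredSum hvar hε (by positivity))
  rw [hvar, one_mul] at hexpansion
  rwa [integral_ramp_sub_integral_gaussianReal H.memLp_centredSum, abs_sub_comm]

theorem dKolNormal_centredSum_le (H : BoundedDependentFamily μ G X D β) (hβ : 0 < β)
    (hvar : ∫ ω, centredSum μ X ω * centredSum μ X ω ∂μ = 1) :
    dKolNormal μ (centredSum μ X) ≤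
      max (68.5 * ((D + 1) ^ 2 * ∑ k, thirdMoment μ (X k))) (22.88 * ((D + 1) * β)) := by
  have hmoment : 0 ≤ (D + 1 : ℝ) ^ 2 * ∑ k, thirdMoment μ (X k) :=
    mul_nonneg (by positivity) (Finset.sum_nonneg fun k _ => thirdMoment_nonneg (X k))
  refine le_max_of_forall_le_smoothing dKolNormal_le_one (by positivity) fun ε hε => ?_
  have hsmooth := dKolNormal_le_of_abs_integral_ramp_sub_le H.memLp_centredSum.aemeasurable hε
    (H.abs_integral_ramp_centredSum_sub_le hvar hε)
  have hdensity := inv_sqrt_two_mul_pi_le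
  refine hsmooth.trans (add_le_add ?_ ?_)
  · linarith [mul_le_mul_of_nonneg_right hdensity hε.le]
  · rw [show 2 * (8 * ((D + 1 : ℝ) * β)) = 16 * ((D + 1) * β) by ring]
    gcongr
    linarith [sqrt_pi_div_two_le]

end BoundedDependentFamily

section Standardization

variable {Ω V : Type*} [MeasurableSpace Ω] {μ : Measure Ω}

lemma thirdMoment_div {v : ℝ} (hv : 0 < v) (Z : Ω → ℝ) :
    thirdMoment μ (fun ω => Z ω / v) = thirdMoment μ Z / v ^ 3 := by
  simp only [thirdMoment, abs_div, div_pow, abs_of_pos hv, integral_div]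

lemma integral_standardized_mul_self {S : Ω → ℝ} (hS : AEMeasurable S μ) {v : ℝ}
    (hv : v = √(variance S μ)) (hvpos : 0 < v) :
    ∫ ω, (S ω - ∫ ω', S ω' ∂μ) / v * ((S ω - ∫ ω', S ω' ∂μ) / v) ∂μ = 1 := by
  have hsq : v ^ 2 = ∫ ω, (S ω - ∫ ω', S ω' ∂μ) ^ 2 ∂μ := by
    rw [hv, Real.sq_sqrt (variance_nonneg _ _), variance_eq_integral hS]
  simp only [← sq, div_pow, integral_div, ← hsq]
  exact div_self (pow_ne_zero 2 hvpos.ne')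

variable [Fintype V] {Y : V → Ω → ℝ}

lemma IsDependencyGraph.boundedDependentFamily_sub_div {G : SimpleGraph V} [DecidableRel G.Adj]
    (hG : IsDependencyGraph μ G Y) (hY : ∀ k, Measurable (Y k)) {D : ℕ}
    (hD : ∀ k, G.degree k ≤ D) {c : V → ℝ} {L : ℝ} (hL : 0 ≤ L)
    (hbdd : ∀ k, ∀ᵐ ω ∂μ, |Y k ω - c k| ≤ L) {v : ℝ} (hv : 0 < v) :
    BoundedDependentFamily μ G (fun k ω => (Y k ω - c k) / v) D (L / v) where
  isDependencyGraph := hG.comp (g := fun k y => (y - c k) / v) fun k => by fun_prop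
  measurable k := ((hY k).sub_const _).div_const v
  degree_le := hD
  bound_nonneg := div_nonneg hL hv.le
  abs_le k := by
    filter_upwards [hbdd k] with ω hω
    rw [abs_div, abs_of_pos hv]
    exact div_le_div_of_nonneg_right hω hv.le

variable [IsProbabilityMeasure μ]

lemma centredSum_sub_div (hY : ∀ k, Integrable (Y k) μ) (c : V → ℝ) (v : ℝ) :
    centredSum μ (fun k ω => (Y k ω - c k) / v) =
      fun ω => (∑ k, Y k ω - ∫ ω', ∑ k, Y k ω' ∂μ) / v := by
  funext ω
  have hcentred : ∀ k, centred μ (fun ω => (Y k ω - c k) / v) ω =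
      (Y k ω - ∫ ω', Y k ω' ∂μ) / v := fun k => by
    simp only [centred, integral_div, integral_sub (hY k) (integrable_const _), integral_const,
      probReal_univ, one_smul]
    ring
  simp only [centredSum, hcentred, ← Finset.sum_div, Finset.sum_sub_distrib,
    integral_finsetSum _ fun k _ => hY k]

lemma integrable_of_ae_abs_sub_le {Z : Ω → ℝ} (hZ : AEMeasurable Z μ) {c L : ℝ}
    (hbdd : ∀ᵐ ω ∂μ, |Z ω - c| ≤ L) : Integrable Z μ :=
  (integrable_add_const_iff (c := -c)).mp <| by
    simpa only [← sub_eq_add_neg] using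
      Integrable.of_bound (hZ.sub_const c).aestronglyMeasurable L hbdd

end Standardization

/-- Theorem 2.1 of the paper: Berry–Esseen bound for bounded random variables with a
dependency graph. -/
theorem berry_esseen_dependency_bounded
    {Ω V : Type*} [MeasurableSpace Ω] [Fintype V] [Nonempty V]
    (μ : Measure Ω) [IsProbabilityMeasure μ]
    (Y : V → Ω → ℝ) (hYmeas : ∀ k, Measurable (Y k))
    (G : SimpleGraph V) [DecidableRel G.Adj]
    (hG : IsDependencyGraph μ G Y)
    (D : ℕ) (hD : ∀ k, G.degree k ≤ D)
    (c : V → ℝ)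
    (L : ℝ) (hL : 0 < L)
    (hbdd : ∀ k, ∀ᵐ ω ∂μ, |Y k ω - c k| ≤ L)
    (S : Ω → ℝ) (hS : S = fun ω => ∑ k, Y k ω)
    (v : ℝ) (hv : v = Real.sqrt (variance S μ)) (hvpos : 0 < v)
    (W : Ω → ℝ) (hW : W = fun ω => (S ω - ∫ ω', S ω' ∂μ) / v)
    (A₃ : ℝ) (hA₃ : A₃ = ∑ k, ∫ ω, |Y k ω - c k| ^ 3 ∂μ) :
    dKolNormal μ W ≤
      max (68.5 * (D + 1 : ℝ) ^ 2 * A₃ / v ^ 3) (22.88 * L * (D + 1 : ℝ) / v) := by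
  set X : V → Ω → ℝ := fun k ω => (Y k ω - c k) / v
  have hX : BoundedDependentFamily μ G X D (L / v) :=
    hG.boundedDependentFamily_sub_div hYmeas hD hL.le hbdd hvpos
  have hWX : W = centredSum μ X := by
    rw [hW, hS, centredSum_sub_div fun k =>
      integrable_of_ae_abs_sub_le (hYmeas k).aemeasurable (hbdd k)]
  have hvar : ∫ ω, centredSum μ X ω * centredSum μ X ω ∂μ = 1 := by
    have hSmeas : Measurable S := hS ▸ Finset.measurable_sum _ fun k _ => hYmeas k
    rw [← hWX, hW]
    exact integral_standardized_mul_self hSmeas.aemeasurable hv hvpos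
  have hmoment : ∑ k, thirdMoment μ (X k) = A₃ / v ^ 3 := by
    rw [hA₃, Finset.sum_div]
    exact Finset.sum_congr rfl fun k _ => thirdMoment_div hvpos _
  calc dKolNormal μ W = dKolNormal μ (centredSum μ X) := by rw [hWX]
    _ ≤ max (68.5 * ((D + 1) ^ 2 * ∑ k, thirdMoment μ (X k))) (22.88 * ((D + 1) * (L / v))) :=
        hX.dKolNormal_centredSum_le (div_pos hL hvpos) hvar
    _ = _ := by
        rw [hmoment]
        congr 1 <;> ring
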